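/- arXiv:1802.03437 — 3 statements merged into one kernel-verified Lean document; each statement's English description precedes it below -/
import Mathlib

section
/- Let Q be a primitive positive-definite quaternary integer-valued quadratic form with level N(Q), and let p be an odd prime with p ∤ N(Q). Then for every positive integer n, the local density β_p(Q;n) exists and satisfies β_p(Q;n) ≥ 1 − 1/p. -/
/-! Let `r k` be the number of solutions of `Q(x) ≡ n` modulo `p ^ k`. Detect the congruence modulo
`p ^ (k + 1)` with the additive characters of `ℤ/p ^ (k + 1)`, indexed by the elements of this
local ring. The characters indexed by the maximal ideal together contribute `p ^ (k + 4) * r k`,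
while each unit contributes, up to a root of unity, a quadratic Gauss sum of absolute value
`p ^ (2 * (k + 1))`, since `p` does not divide `det A`: from `N A⁻¹` integral, `det A` divides
`N ^ 4`. There are `p ^ k * (p - 1)` units, so consecutive terms of `r k / p ^ (3 * k)` differ by
at most `(1 - 1 / p) * (1 / p) ^ (k + 1)`. These bounds sum to `1 / p`, and `r 0 = 1`.
-/

open scoped BigOperators

/-- Value of the quadratic form with Gram matrix `A` (symmetric, even diagonal)
over any commutative ring: `Q(x) = ∑ (aᵢᵢ/2) xᵢ² + ∑_{i<j} aᵢⱼ xᵢ xⱼ`. -/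
def Qval {R : Type*} [CommRing R] (A : Matrix (Fin 4) (Fin 4) ℤ) (x : Fin 4 → R) : R :=
  (∑ i, ((A i i / 2 : ℤ) : R) * x i ^ 2) +
    ∑ i, ∑ j ∈ Finset.Ioi i, ((A i j : ℤ) : R) * (x i * x j)

/-- `A` is the Gram matrix of an integer-valued quadratic form. -/
def IsGram (A : Matrix (Fin 4) (Fin 4) ℤ) : Prop :=
  A.IsSymm ∧ ∀ i, 2 ∣ A i i

/-- The form is primitive: the gcd of its coefficients is 1. -/
def IsPrimitiveQF (A : Matrix (Fin 4) (Fin 4) ℤ) : Prop :=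
  ∀ d : ℤ, (∀ i, d ∣ A i i / 2) → (∀ i j, i ≠ j → d ∣ A i j) → IsUnit d

/-- The form is positive definite. -/
def PosDefQF (A : Matrix (Fin 4) (Fin 4) ℤ) : Prop :=
  (A.map (Int.cast : ℤ → ℝ)).PosDef

/-- `N` is the level of the form with Gram matrix `A`: the smallest positive integer
such that `N • A⁻¹` has integer entries and even diagonal. -/
def IsLevel (A : Matrix (Fin 4) (Fin 4) ℤ) (N : ℕ) : Prop :=
  0 < N ∧
    (∃ B : Matrix (Fin 4) (Fin 4) ℤ,
      B.map (Int.cast : ℤ → ℚ) = (N : ℚ) • (A.map (Int.cast : ℤ → ℚ))⁻¹ ∧ ∀ i, 2 ∣ B i i) ∧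
    ∀ M : ℕ, 0 < M →
      (∃ B : Matrix (Fin 4) (Fin 4) ℤ,
        B.map (Int.cast : ℤ → ℚ) = (M : ℚ) • (A.map (Int.cast : ℤ → ℚ))⁻¹ ∧ ∀ i, 2 ∣ B i i) →
      N ≤ M

/-- `n` is represented by the form over `ℤ`. -/
def Represented (A : Matrix (Fin 4) (Fin 4) ℤ) (n : ℕ) : Prop :=
  ∃ x : Fin 4 → ℤ, Qval A x = (n : ℤ)

/-- `n` is locally represented: representable over `ℤ_p` for every prime `p`. -/
def LocallyRepresented (A : Matrix (Fin 4) (Fin 4) ℤ) (n : ℕ) : Prop :=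
  ∀ (p : ℕ) [Fact p.Prime], ∃ x : Fin 4 → ℤ_[p], Qval A x = (n : ℤ_[p])

/-- Number of solutions of `Q(x) ≡ n mod p^k`. -/
noncomputable def localCount (A : Matrix (Fin 4) (Fin 4) ℤ) (p n k : ℕ) : ℕ :=
  Nat.card {x : Fin 4 → ZMod (p ^ k) // Qval A x = (n : ZMod (p ^ k))}

/-- The local density `β_p(Q;n)` exists and is at least `c`. -/
def DensityBound (A : Matrix (Fin 4) (Fin 4) ℤ) (p n : ℕ) (c : ℝ) : Prop :=
  ∃ β : ℝ,
    Filter.Tendsto (fun k => (localCount A p n k : ℝ) / (p : ℝ) ^ (3 * k))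
      Filter.atTop (nhds β) ∧ c ≤ β

open IsLocalRing

section FiniteLocalRing

variable {R : Type*} [CommRing R] [Fintype R] [IsLocalRing R] [Fintype Rˣ]
  [Fintype (maximalIdeal R)]

lemma sum_units_add_sum_maximalIdeal {α : Type*} [AddCommMonoid α] (f : R → α) :
    ∑ u : Rˣ, f u + ∑ t : maximalIdeal R, f t = ∑ x, f x := by
  classical
  have hunits : ∑ u : Rˣ, f u = ∑ x : {x : R // IsUnit x}, f x :=
    Fintype.sum_bijective (fun u : Rˣ => (⟨u, u.isUnit⟩ : {x : R // IsUnit x}))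
      ⟨fun _ _ h => Units.ext (congrArg Subtype.val h), fun ⟨_, u, hu⟩ => ⟨u, Subtype.ext hu⟩⟩
      _ _ fun _ => rfl
  have hnonunits : ∑ t : maximalIdeal R, f t = ∑ x : {x : R // ¬ IsUnit x}, f x :=
    Fintype.sum_equiv (Equiv.subtypeEquivRight (q := fun x => ¬ IsUnit x) mem_maximalIdeal)
      _ _ fun _ => rfl
  rw [hunits, hnonunits, Fintype.sum_subtype_add_sum_subtype]

lemma card_units_add_card_maximalIdeal (R : Type*) [CommRing R] [Finite R] [IsLocalRing R] :
    Nat.card Rˣ + Nat.card (maximalIdeal R) = Nat.card R := by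
  classical
  have := Fintype.ofFinite R
  simpa only [Nat.card_eq_fintype_card, Fintype.card_eq_sum_ones] using
    sum_units_add_sum_maximalIdeal (R := R) fun _ => 1

end FiniteLocalRing

section AddChar

variable {R : Type*} [CommRing R] {ψ : AddChar R ℂ}
  {M : Type*} [AddCommGroup M] [Module R M] [Fintype M]

lemma isPrimitive_mulShift_units (hψ : ψ.IsPrimitive) (u : Rˣ) :
    (ψ.mulShift u).IsPrimitive := fun a ha => by
  rw [AddChar.mulShift_mulShift]
  exact hψ (by simpa using ha)

lemma sum_addChar_linearMap (hψ : ψ.IsPrimitive) (f : M →ₗ[R] R) [Decidable (f = 0)] :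
    ∑ x, ψ (f x) = if f = 0 then (Fintype.card M : ℂ) else 0 := by
  classical
  have htriv : ψ.compAddMonoidHom f.toAddMonoidHom = 0 ↔ f = 0 := by
    refine ⟨fun h => LinearMap.ext fun x => ?_, fun h => by ext x; simp [h]⟩
    -- The image of `f` is an ideal, and `ψ` is nontrivial on every nonzero ideal.
    by_contra hx
    refine hψ hx (AddChar.ext _ _ fun r => ?_)
    simpa [mul_comm] using DFunLike.congr_fun h (r • x)
  have := AddChar.sum_eq_ite (ψ.compAddMonoidHom f.toAddMonoidHom)
  simpa [htriv] using this

lemma sum_units_addChar_mul [Fintype R] [IsLocalRing R] [Fintype Rˣ] [Fintype (maximalIdeal R)]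
    [DecidableEq R] (hψ : ψ.IsPrimitive) (c : R) [Decidable (∀ t ∈ maximalIdeal R, t * c = 0)] :
    ∑ u : Rˣ, ψ (u * c) = (if c = 0 then (Fintype.card R : ℂ) else 0) -
      if ∀ t ∈ maximalIdeal R, t * c = 0 then (Fintype.card (maximalIdeal R) : ℂ) else 0 := by
  classical
  have hideal : LinearMap.mulRight R c ∘ₗ (maximalIdeal R).subtype = 0 ↔
      ∀ t ∈ maximalIdeal R, t * c = 0 := by
    simp [LinearMap.ext_iff]
  have hsum := sum_addChar_linearMap hψ (LinearMap.mulRight R c ∘ₗ (maximalIdeal R).subtype)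
  simp only [hideal, LinearMap.comp_apply, LinearMap.mulRight_apply,
    Submodule.subtype_apply] at hsum
  rw [eq_sub_iff_add_eq, ← hsum, sum_units_add_sum_maximalIdeal fun t => ψ (t * c),
    AddChar.sum_mulShift c hψ]
  norm_cast

end AddChar

section QuadraticGaussSum

variable {R M : Type*} [CommRing R] [AddCommGroup M] [Module R M]

/-- The quadratic Gauss sum `∑ ψ(Q(x))` of a quadratic form `Q` on a finite module, with respect
to an additive character `ψ` of the base ring. -/
def quadraticGaussSum [Fintype M] (ψ : AddChar R ℂ) (Q : QuadraticForm R M) : ℂ :=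
  ∑ x, ψ (Q x)

lemma norm_quadraticGaussSum [Finite R] [Fintype M] {ψ : AddChar R ℂ} (hψ : ψ.IsPrimitive)
    {Q : QuadraticForm R M} (hQ : Q.polarBilin.SeparatingRight) :
    ‖quadraticGaussSum ψ Q‖ = √(Fintype.card M) := by
  classical
  have horth (y : M) : ∑ x, ψ (Q.polarBilin x y) = if y = 0 then (Fintype.card M : ℂ) else 0 := by
    have hflip : Q.polarBilin.flip y = 0 ↔ y = 0 :=
      ⟨fun h => hQ y fun x => DFunLike.congr_fun h x, fun h => by simp [h]⟩
    simpa only [LinearMap.flip_apply, hflip] using sum_addChar_linearMap hψ (Q.polarBilin.flip y)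
  have hdiff (x y : M) : starRingEnd ℂ (ψ (Q x)) * ψ (Q (x + y)) =
      ψ (Q y) * ψ (Q.polarBilin x y) := by
    rw [← AddChar.map_neg_eq_conj, ← AddChar.map_add_eq_mul, ← AddChar.map_add_eq_mul,
      QuadraticMap.polarBilin_apply_apply, QuadraticMap.polar]
    congr 1
    abel
  have hsq : starRingEnd ℂ (quadraticGaussSum ψ Q) * quadraticGaussSum ψ Q = Fintype.card M :=
    calc
      _ = ∑ x, ∑ y, starRingEnd ℂ (ψ (Q x)) * ψ (Q (x + y)) := by
        rw [quadraticGaussSum, map_sum, Finset.sum_mul]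
        refine Finset.sum_congr rfl fun x _ => ?_
        rw [Finset.mul_sum, ← Equiv.sum_comp (Equiv.addLeft x)]
        rfl
      _ = ∑ y, ψ (Q y) * ∑ x, ψ (Q.polarBilin x y) := by
        simp_rw [hdiff]
        rw [Finset.sum_comm]
        simp_rw [Finset.mul_sum]
      _ = Fintype.card M := by simp only [horth]; simp
  rw [← Real.sqrt_sq (norm_nonneg _)]
  congr 1
  rw [Complex.conj_mul'] at hsq
  exact_mod_cast hsq

lemma abs_card_mul_card_solutions_sub_le [Finite R] [IsLocalRing R] [Finite M] {ψ : AddChar R ℂ}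
    (hψ : ψ.IsPrimitive) {Q : QuadraticForm R M} (hQ : Q.polarBilin.SeparatingRight) (n : R) :
    |(Nat.card R * Nat.card {x // Q x = n} - Nat.card (maximalIdeal R) *
      Nat.card {x // ∀ t ∈ maximalIdeal R, t * (Q x - n) = 0} : ℝ)| ≤
      Nat.card Rˣ * √(Nat.card M) := by
  classical
  have := Fintype.ofFinite R
  have := Fintype.ofFinite M
  have hfourier : ((Nat.card R * Nat.card {x // Q x = n} - Nat.card (maximalIdeal R) *
      Nat.card {x // ∀ t ∈ maximalIdeal R, t * (Q x - n) = 0} : ℝ) : ℂ) =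
      ∑ u : Rˣ, ψ (-(u * n)) * quadraticGaussSum (ψ.mulShift u) Q := by
    have hswap (u : Rˣ) : ψ (-(u * n)) * quadraticGaussSum (ψ.mulShift u) Q =
        ∑ x, ψ (u * (Q x - n)) := by
      rw [quadraticGaussSum, Finset.mul_sum]
      refine Finset.sum_congr rfl fun x _ => ?_
      rw [AddChar.mulShift_apply, ← AddChar.map_add_eq_mul]
      ring_nf
    simp_rw [hswap]
    rw [Finset.sum_comm]
    simp_rw [sum_units_addChar_mul hψ, Finset.sum_sub_distrib, ← Finset.sum_filter, sub_eq_zero]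
    simp [Nat.card_eq_fintype_card, Fintype.card_subtype, mul_comm]
  rw [← Real.norm_eq_abs, ← Complex.norm_real, hfourier]
  refine (norm_sum_le _ _).trans_eq ?_
  simp [norm_quadraticGaussSum (isPrimitive_mulShift_units hψ _) hQ]

end QuadraticGaussSum

section ZModPrimePow

variable (p k : ℕ) [hp : Fact p.Prime]

instance isLocalRing_zmod_prime_pow : IsLocalRing (ZMod (p ^ (k + 1))) :=
  have : Fact (1 < p ^ (k + 1)) := ⟨Nat.one_lt_pow k.succ_ne_zero hp.out.one_lt⟩
  IsLocalRing.of_surjective' (PadicInt.toZModPow (k + 1)) (ZMod.ringHom_surjective _)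

lemma card_units_zmod_prime_pow : Nat.card (ZMod (p ^ (k + 1)))ˣ = p ^ k * (p - 1) := by
  rw [Nat.card_eq_fintype_card, ZMod.card_units_eq_totient, Nat.totient_prime_pow_succ hp.out]

lemma card_maximalIdeal_zmod_prime_pow :
    Nat.card (maximalIdeal (ZMod (p ^ (k + 1)))) = p ^ k := by
  have hcard := card_units_add_card_maximalIdeal (ZMod (p ^ (k + 1)))
  have hsplit : p ^ (k + 1) = p ^ k * (p - 1) + p ^ k := by
    rw [← Nat.mul_succ, Nat.succ_eq_add_one, Nat.sub_add_cancel hp.out.one_le, pow_succ]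
  rw [card_units_zmod_prime_pow, Nat.card_zmod] at hcard
  lia

variable {p k}

lemma natCast_mem_maximalIdeal_zmod_prime_pow {a : ℕ} :
    (a : ZMod (p ^ (k + 1))) ∈ maximalIdeal (ZMod (p ^ (k + 1))) ↔ p ∣ a := by
  rw [mem_maximalIdeal, mem_nonunits_iff,
    ZMod.isUnit_natCast_iff_not_dvd_pow hp.out k.succ_pos, not_not]

lemma forall_mem_maximalIdeal_mul_eq_zero_iff (c : ZMod (p ^ (k + 1))) :
    (∀ t ∈ maximalIdeal (ZMod (p ^ (k + 1))), t * c = 0) ↔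
      ZMod.castHom (pow_dvd_pow p (k.le_add_right 1)) (ZMod (p ^ k)) c = 0 := by
  obtain ⟨a, rfl⟩ := ZMod.natCast_zmod_surjective c
  rw [map_natCast, ZMod.natCast_eq_zero_iff]
  constructor
  · intro h
    have hpa := h p (natCast_mem_maximalIdeal_zmod_prime_pow.2 dvd_rfl)
    rw [← Nat.cast_mul, ZMod.natCast_eq_zero_iff, pow_succ'] at hpa
    exact Nat.dvd_of_mul_dvd_mul_left hp.out.pos hpa
  · intro ha t ht
    obtain ⟨b, rfl⟩ := ZMod.natCast_zmod_surjective t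
    rw [← Nat.cast_mul, ZMod.natCast_eq_zero_iff, pow_succ']
    exact mul_dvd_mul (natCast_mem_maximalIdeal_zmod_prime_pow.1 ht) ha

end ZModPrimePow

section GramForm

variable {ι : Type*} [LinearOrder ι]

/-- The upper triangular matrix `U` with `A = U + Uᵀ`, for `A` symmetric with even diagonal. It
represents the quadratic form `x ↦ (1/2) xᵀ A x` without division by `2`. -/
def gramHalf (A : Matrix ι ι ℤ) : Matrix ι ι ℤ :=
  Matrix.of fun i j => if i < j then A i j else if i = j then A i i / 2 else 0

lemma gramHalf_add_transpose {A : Matrix ι ι ℤ} (hsymm : A.IsSymm) (heven : ∀ i, 2 ∣ A i i) :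
    gramHalf A + (gramHalf A).transpose = A := by
  ext i j
  rcases lt_trichotomy i j with hij | rfl | hij
  · simp [gramHalf, hij, hij.not_gt, hij.ne']
  · simpa [gramHalf, ← two_mul] using Int.mul_ediv_cancel' (heven i)
  · simpa [gramHalf, hij, hij.not_gt, hij.ne'] using hsymm.apply i j

variable (R : Type*) [CommRing R] [Fintype ι]

/-- The quadratic form over `R` with Gram matrix `A`, where the diagonal of `A` is even. -/
def gramForm (A : Matrix ι ι ℤ) : QuadraticForm R (ι → R) :=
  ((gramHalf A).map (Int.cast : ℤ → R)).toQuadraticForm'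

variable {R}

lemma polarBilin_gramForm {A : Matrix ι ι ℤ} (hsymm : A.IsSymm) (heven : ∀ i, 2 ∣ A i i) :
    (gramForm R A).polarBilin = Matrix.toLinearMap₂' R (A.map (Int.cast : ℤ → R)) := by
  have hcast : A.map (Int.cast : ℤ → R) =
      (gramHalf A).map Int.cast + ((gramHalf A).map Int.cast).transpose := by
    conv_lhs => rw [← gramHalf_add_transpose hsymm heven]
    ext
    simp
  rw [gramForm, Matrix.toQuadraticForm', LinearMap.BilinMap.polarBilin_toQuadraticMap, hcast,
    map_add]
  congr 1
  refine LinearMap.ext₂ fun x y => ?_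
  rw [LinearMap.flip_apply, Matrix.toLinearMap₂'_apply', Matrix.toLinearMap₂'_apply',
    Matrix.mulVec_transpose, Matrix.dotProduct_mulVec, dotProduct_comm]

lemma gramForm_apply [LocallyFiniteOrderTop ι] (A : Matrix ι ι ℤ) (x : ι → R) :
    gramForm R A x = (∑ i, ((A i i / 2 : ℤ) : R) * x i ^ 2) +
      ∑ i, ∑ j ∈ Finset.Ioi i, ((A i j : ℤ) : R) * (x i * x j) := by
  have hterm (i j : ι) : x i * (x j * gramHalf A i j) =
      (if i = j then ((A i i / 2 : ℤ) : R) * x i ^ 2 else 0) +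
        if i < j then ((A i j : ℤ) : R) * (x i * x j) else 0 := by
    rcases lt_trichotomy i j with hij | rfl | hij
    · simp [gramHalf, hij, hij.ne, mul_comm, mul_assoc]
    · simp [gramHalf, sq, mul_comm, mul_assoc]
    · simp [gramHalf, hij.not_gt, hij.ne']
  simp [gramForm, Matrix.toQuadraticForm', LinearMap.BilinMap.toQuadraticMap_apply,
    Matrix.toLinearMap₂'_apply, hterm, Finset.sum_add_distrib, ← Finset.sum_filter,
    Finset.filter_lt_eq_Ioi]

lemma gramForm_eq_Qval (A : Matrix (Fin 4) (Fin 4) ℤ) (x : Fin 4 → R) :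
    gramForm R A x = Qval A x :=
  gramForm_apply A x

lemma separatingRight_polarBilin_gramForm {A : Matrix ι ι ℤ} (hsymm : A.IsSymm)
    (heven : ∀ i, 2 ∣ A i i) (hdet : IsUnit (A.det : R)) :
    (gramForm R A).polarBilin.SeparatingRight := by
  rw [polarBilin_gramForm hsymm heven]
  refine (Matrix.Nondegenerate.of_det_mem_nonZeroDivisors ?_).2.toLinearMap₂'
  rw [← Int.cast_det]
  exact hdet.mem_nonZeroDivisors

end GramForm

section Level

lemma det_mul_det_eq_pow_of_map_eq_smul_inv {ι : Type*} [Fintype ι] [DecidableEq ι]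
    {A B : Matrix ι ι ℤ} {N : ℕ} (hdet : A.det ≠ 0)
    (hB : B.map (Int.cast : ℤ → ℚ) = (N : ℚ) • (A.map (Int.cast : ℤ → ℚ))⁻¹) :
    B.det * A.det = (N : ℤ) ^ Fintype.card ι := by
  have hdet' : (A.map (Int.cast : ℤ → ℚ)).det ≠ 0 := by
    rw [← Int.cast_det]
    exact_mod_cast hdet
  have h := congrArg Matrix.det hB
  rw [Matrix.det_smul, Matrix.det_nonsing_inv, Ring.inverse_eq_inv', ← div_eq_mul_inv,
    eq_div_iff hdet', ← Int.cast_det, ← Int.cast_det] at h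
  exact_mod_cast h

lemma not_dvd_det_of_isLevel {A : Matrix (Fin 4) (Fin 4) ℤ} {N p : ℕ} (hdet : A.det ≠ 0)
    (hN : IsLevel A N) (hp : p.Prime) (hpN : ¬ p ∣ N) : ¬ (p : ℤ) ∣ A.det := by
  obtain ⟨-, ⟨B, hB, -⟩, -⟩ := hN
  intro h
  have hdvd : (p : ℤ) ∣ (N : ℤ) ^ Fintype.card (Fin 4) :=
    det_mul_det_eq_pow_of_map_eq_smul_inv hdet hB ▸ h.mul_left B.det
  exact hpN (Int.natCast_dvd_natCast.1 ((Nat.prime_iff_prime_int.1 hp).dvd_of_dvd_pow hdvd))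

lemma det_ne_zero_of_posDefQF {A : Matrix (Fin 4) (Fin 4) ℤ} (hA : PosDefQF A) : A.det ≠ 0 := by
  have hpos := Matrix.PosDef.det_pos hA
  rw [← Int.cast_det] at hpos
  exact_mod_cast hpos.ne'

end Level

section LocalCount

lemma card_subtype_comp_mul_card {G H : Type*} [AddGroup G] [AddGroup H] {f : G →+ H}
    (hf : Function.Surjective f) (P : H → Prop) :
    Nat.card {x // P (f x)} * Nat.card H = Nat.card G * Nat.card {y // P y} := by
  have hfiber (Q : H → Prop) :
      Nat.card {x // Q (f x)} = Nat.card {y // Q y} * Nat.card f.ker := by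
    rw [← Nat.card_prod]
    exact Nat.card_congr <| (Equiv.sigmaSubtypeFiberEquivSubtype f fun _ => Iff.rfl).symm.trans <|
      (Equiv.sigmaCongrRight fun y : Subtype Q =>
        AddMonoidHom.fiberEquivKerOfSurjective hf (y : H)).trans (Equiv.sigmaEquivProd _ _)
  have hcard := hfiber fun _ => True
  simp only [Nat.card_congr (Equiv.subtypeUnivEquiv fun _ => trivial)] at hcard
  rw [hfiber P, hcard]
  ring

variable (A : Matrix (Fin 4) (Fin 4) ℤ) {p : ℕ}

lemma map_Qval {R S : Type*} [CommRing R] [CommRing S] (f : R →+* S) (x : Fin 4 → R) :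
    f (Qval A x) = Qval A (f ∘ x) := by
  simp [Qval]

lemma localCount_zero (n : ℕ) : localCount A p n 0 = 1 := by
  have : Subsingleton (ZMod (p ^ 0)) := by rw [pow_zero]; infer_instance
  exact Nat.card_eq_one_iff_unique.2 ⟨inferInstance, ⟨0, Subsingleton.elim _ _⟩⟩

lemma card_castHom_Qval_sub_eq_zero [hp : Fact p.Prime] (n k : ℕ) :
    Nat.card {x : Fin 4 → ZMod (p ^ (k + 1)) //
      ZMod.castHom (pow_dvd_pow p (k.le_add_right 1)) (ZMod (p ^ k)) (Qval A x - n) = 0} =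
      p ^ 4 * localCount A p n k := by
  let π := ZMod.castHom (pow_dvd_pow p (k.le_add_right 1)) (ZMod (p ^ k))
  have hsurj : Function.Surjective (π.toAddMonoidHom.compLeft (Fin 4)) :=
    (ZMod.castHom_surjective (pow_dvd_pow p (k.le_add_right 1))).comp_left
  have hlift (x : Fin 4 → ZMod (p ^ (k + 1))) :
      Qval A (π.toAddMonoidHom.compLeft (Fin 4) x) = n ↔ π (Qval A x - n) = 0 := by
    rw [map_sub, map_natCast, sub_eq_zero, map_Qval]
    rfl
  have hcard := card_subtype_comp_mul_card hsurj fun y => Qval A y = n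
  simp only [hlift, Nat.card_fun, Nat.card_zmod, Nat.card_fin] at hcard
  refine mul_right_cancel₀ (pow_ne_zero 4 (pow_ne_zero k hp.out.ne_zero)) (hcard.trans ?_)
  rw [localCount]
  ring

lemma abs_pow_mul_localCount_succ_sub_le {A : Matrix (Fin 4) (Fin 4) ℤ} (hA : IsGram A) {p : ℕ}
    [hp : Fact p.Prime] (hdet : ¬ (p : ℤ) ∣ A.det) (n k : ℕ) :
    |(p : ℝ) ^ (k + 1) * localCount A p n (k + 1) - (p : ℝ) ^ (k + 4) * localCount A p n k| ≤
      (p : ℝ) ^ k * (p - 1) * (p : ℝ) ^ (2 * (k + 1)) := by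
  have hunit : IsUnit (A.det : ZMod (p ^ (k + 1))) := by
    rw [ZMod.coe_int_isUnit_iff_isCoprime, Nat.cast_pow]
    exact ((Nat.prime_iff_prime_int.1 hp.out).coprime_iff_not_dvd.2 hdet).pow_left
  have h := abs_card_mul_card_solutions_sub_le (ZMod.isPrimitive_stdAddChar (p ^ (k + 1)))
    (separatingRight_polarBilin_gramForm hA.1 hA.2 hunit) n
  have hsqrt : √(Nat.card (Fin 4 → ZMod (p ^ (k + 1))) : ℝ) = (p : ℝ) ^ (2 * (k + 1)) := by
    rw [Real.sqrt_eq_iff_mul_self_eq (by positivity) (by positivity), Nat.card_fun,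
      Nat.card_zmod, Nat.card_fin]
    push_cast
    ring
  simp only [gramForm_eq_Qval, forall_mem_maximalIdeal_mul_eq_zero_iff,
    card_castHom_Qval_sub_eq_zero, card_maximalIdeal_zmod_prime_pow, card_units_zmod_prime_pow,
    Nat.card_zmod, hsqrt] at h
  push_cast [hp.out.one_le] at h
  rw [← mul_assoc, ← pow_add] at h
  exact h

lemma dist_localCount_div_le {A : Matrix (Fin 4) (Fin 4) ℤ} (hA : IsGram A) {p : ℕ}
    [hp : Fact p.Prime] (hdet : ¬ (p : ℤ) ∣ A.det) (n k : ℕ) :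
    dist ((localCount A p n k : ℝ) / (p : ℝ) ^ (3 * k))
      ((localCount A p n (k + 1) : ℝ) / (p : ℝ) ^ (3 * (k + 1))) ≤
      (1 - 1 / (p : ℝ)) * (1 / p) * (1 / p) ^ k := by
  have hpos : (0 : ℝ) < p := mod_cast hp.out.pos
  have hdiff : (localCount A p n (k + 1) : ℝ) / (p : ℝ) ^ (3 * (k + 1)) -
      (localCount A p n k : ℝ) / (p : ℝ) ^ (3 * k) =
      ((p : ℝ) ^ (k + 1) * localCount A p n (k + 1) - (p : ℝ) ^ (k + 4) * localCount A p n k) /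
        (p : ℝ) ^ (4 * (k + 1)) := by
    field_simp
    ring
  rw [dist_comm, Real.dist_eq, hdiff, abs_div, abs_of_pos (pow_pos hpos _),
    div_le_iff₀ (pow_pos hpos _)]
  refine (abs_pow_mul_localCount_succ_sub_le hA hdet n k).trans_eq ?_
  rw [one_div_pow]
  field_simp
  ring

end LocalCount

theorem local_density_unramified_general {A : Matrix (Fin 4) (Fin 4) ℤ} (hA : IsGram A) {p : ℕ}
    (hp : p.Prime) (hdet : ¬ (p : ℤ) ∣ A.det) (n : ℕ) : DensityBound A p n (1 - 1 / (p : ℝ)) := by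
  have : Fact p.Prime := ⟨hp⟩
  have hlt : 1 / (p : ℝ) < 1 := by
    rw [one_div]
    exact inv_lt_one_of_one_lt₀ (mod_cast hp.one_lt)
  have hgeom := dist_localCount_div_le hA hdet n
  obtain ⟨β, hβ⟩ := cauchySeq_tendsto_of_complete (cauchySeq_of_le_geometric _ _ hlt hgeom)
  have hdist := dist_le_of_le_geometric_of_tendsto₀ _ _ hlt hgeom hβ
  rw [localCount_zero, mul_div_cancel_left₀ _ (sub_pos.2 hlt).ne', Real.dist_eq, mul_zero,
    pow_zero, Nat.cast_one, div_one] at hdist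
  exact ⟨β, hβ, sub_le_comm.1 (abs_le.1 hdist).2⟩

/-- If `p` is an odd prime not dividing the level, then `β_p(Q;n) ≥ 1 - 1/p`
for every positive integer `n`. -/
theorem local_density_unramified
    (A : Matrix (Fin 4) (Fin 4) ℤ) (N p : ℕ)
    (hA : IsGram A) (hprim : IsPrimitiveQF A) (hpd : PosDefQF A)
    (hN : IsLevel A N) (hp : p.Prime) (hodd : p ≠ 2) (hpN : ¬ p ∣ N) :
    ∀ n : ℕ, 0 < n → DensityBound A p n (1 - 1 / (p : ℝ)) := fun n _ =>
  local_density_unramified_general hA hp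
    (not_dvd_det_of_isLevel (det_ne_zero_of_posDefQF hpd) hN hp hpN) n
end

section
/- For every ε > 0 there exists a constant C = C(ε) > 0 such that for every positive-definite quaternary integer-valued quadratic form R with discriminant D(R) and every positive integer n, the number of representations satisfies r_R(n) ≤ C · ( n^(1+ε) · D(R)^(−1/4+ε) + n^(1/2) · (n·D(R))^ε ). -/
/-!
Pass to a Hermite-reduced basis. Completing squares in the first two coordinates turns the
representations of `n` with prescribed last two coordinates into elements of prescribed norm in an
imaginary quadratic order `ℤ[√d]`; by the divisor bound there are `O((n D) ^ ε)` of them. The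
number of admissible pairs of last two coordinates is bounded one coordinate at a time by a product
of two interval lengths, which the Hermite inequalities bound by `n D ^ (-1/4) + n ^ (1/2)`.
-/

open scoped BigOperators

/-- The representation number `r_R(n) = #{x ∈ ℤ⁴ : R(x) = n}`. -/
noncomputable def repCount (A : Matrix (Fin 4) (Fin 4) ℤ) (n : ℕ) : ℕ :=
  Nat.card {x : Fin 4 → ℤ // Qval A x = (n : ℤ)}

open Matrix

/-! ### The divisor bound -/

lemma natCast_add_one_le_mul_pow {δ K q : ℝ} (hK : 1 ≤ K) (hδ : 0 ≤ δ) (hKδ : 1 ≤ K * δ)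
    (hq : 1 + δ ≤ q) (k : ℕ) : (k : ℝ) + 1 ≤ K * q ^ k := by
  calc (k : ℝ) + 1 ≤ k * (K * δ) + K := by gcongr; exact le_mul_of_one_le_right k.cast_nonneg hKδ
    _ = K * (1 + k * δ) := by ring
    _ ≤ K * (1 + δ) ^ k := by gcongr; exact one_add_mul_le_pow (by linarith) k
    _ ≤ K * q ^ k := by gcongr

lemma card_divisors_le_prod_mul_rpow {c : ℕ → ℝ} {ε : ℝ}
    (hc : ∀ p k : ℕ, p.Prime → (k : ℝ) + 1 ≤ c p * ((p : ℝ) ^ ε) ^ k) {n : ℕ} (hn : n ≠ 0) :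
    (n.divisors.card : ℝ) ≤ (∏ p ∈ n.primeFactors, c p) * (n : ℝ) ^ ε := by
  have hn_rpow : (n : ℝ) ^ ε = ∏ p ∈ n.primeFactors, ((p : ℝ) ^ ε) ^ n.factorization p := by
    conv_lhs => rw [← Nat.prod_factorization_pow_eq_self hn]
    rw [Finsupp.prod, Nat.support_factorization, Nat.cast_prod,
      ← Real.finsetProd_rpow _ _ fun _ _ ↦ by positivity]
    simp only [Nat.cast_pow, ← Real.rpow_natCast, ← Real.rpow_mul (Nat.cast_nonneg _), mul_comm]
  rw [Nat.card_divisors hn, hn_rpow, ← Finset.prod_mul_distrib]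
  push_cast
  exact Finset.prod_le_prod (fun _ _ ↦ by positivity)
    fun p hp ↦ hc p _ (Nat.prime_of_mem_primeFactors hp)

theorem exists_card_divisors_le_mul_rpow {ε : ℝ} (hε : 0 < ε) :
    ∃ C : ℝ, 1 ≤ C ∧ ∀ n : ℕ, n ≠ 0 → (n.divisors.card : ℝ) ≤ C * (n : ℝ) ^ ε := by
  obtain ⟨N, hN⟩ := exists_nat_ge ((2 : ℝ) ^ (1 / ε))
  set δ : ℝ := ε * Real.log 2
  have hδ : 0 < δ := mul_pos hε (Real.log_pos one_lt_two)
  set K : ℝ := max 1 δ⁻¹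
  have hK : 1 ≤ K := le_max_left _ _
  have hKδ : 1 ≤ K * δ := (inv_le_iff_one_le_mul₀ hδ).1 (le_max_right _ _)
  -- Primes `p ≥ N` satisfy `2 ≤ p ^ ε` and contribute nothing to the constant.
  have local_bound (p k : ℕ) (hp : p.Prime) :
      (k : ℝ) + 1 ≤ (if p < N then K else 1) * ((p : ℝ) ^ ε) ^ k := by
    split_ifs with hpN
    · refine natCast_add_one_le_mul_pow hK hδ.le hKδ ?_ k
      calc 1 + δ ≤ Real.exp (Real.log 2 * ε) := by
            linarith [Real.add_one_le_exp (Real.log 2 * ε), mul_comm ε (Real.log 2)]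
        _ = 2 ^ ε := (Real.rpow_def_of_pos two_pos ε).symm
        _ ≤ (p : ℝ) ^ ε := by gcongr; exact_mod_cast hp.two_le
    · refine natCast_add_one_le_mul_pow le_rfl zero_le_one (by norm_num) ?_ k
      calc (1 : ℝ) + 1 = ((2 : ℝ) ^ (1 / ε)) ^ ε := by
            rw [← Real.rpow_mul two_pos.le, one_div_mul_cancel hε.ne', Real.rpow_one]; norm_num
        _ ≤ (p : ℝ) ^ ε := by
            gcongr; exact hN.trans (by exact_mod_cast not_lt.1 hpN)
  refine ⟨K ^ N, one_le_pow₀ hK, fun n hn ↦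
    (card_divisors_le_prod_mul_rpow local_bound hn).trans ?_⟩
  gcongr
  rw [Finset.prod_ite, Finset.prod_const, Finset.prod_const_one, mul_one]
  refine pow_le_pow_right₀ hK ?_
  calc (n.primeFactors.filter (· < N)).card ≤ (Finset.range N).card :=
        Finset.card_le_card fun p hp ↦ Finset.mem_range.2 (Finset.mem_filter.1 hp).2
    _ = N := Finset.card_range N

/-! ### Elements of given norm in `ℤ[√d]` -/

lemma dvd_two_of_sq_dvd_four_mul {a d : ℤ} (hd : Squarefree d) (h : a ^ 2 ∣ 4 * d) : a ∣ 2 := by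
  rcases Int.even_or_odd' a with ⟨k, rfl | rfl⟩
  · have : k * k ∣ d := (mul_dvd_mul_iff_left four_ne_zero).1
      (by rwa [show 4 * (k * k) = (2 * k) ^ 2 by ring])
    simpa using mul_dvd_mul_left 2 ((hd k this).dvd (a := 1))
  · have : IsCoprime ((2 * k + 1) ^ 2) (2 ^ 2 : ℤ) := IsCoprime.pow ⟨1, -k, by ring⟩
    have : (2 * k + 1) * (2 * k + 1) ∣ d := by
      simpa only [sq] using this.dvd_of_dvd_mul_left h
    exact (hd _ this).dvd

section Zsqrtd

variable {d : ℤ}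

lemma isCoprime_im_norm {z : ℤ√d} (hz : IsCoprime z.re z.im) : IsCoprime z.im z.norm := by
  have : IsCoprime z.im (z.re * z.re + z.im * (-d * z.im)) :=
    (hz.symm.mul_right hz.symm).add_mul_left_right _
  rwa [show z.norm = z.re * z.re + z.im * (-d * z.im) by rw [Zsqrtd.norm_def]; ring]

lemma norm_dvd_im_mul_star_mul_im_mul {z w : ℤ√d} (h : z.norm = w.norm) :
    z.norm ∣ (z * star w).im * (z * w).im := by
  refine ⟨z.im ^ 2 - w.im ^ 2, ?_⟩
  simp only [Zsqrtd.norm_def, Zsqrtd.im_mul, Zsqrtd.re_star, Zsqrtd.im_star] at h ⊢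
  linear_combination -z.im ^ 2 * h

lemma dvd_im_mul_star_of_dvd {a : ℤ} {z₀ z w : ℤ√d} (h₀ : IsCoprime z₀.re z₀.im)
    (ha : a ∣ z₀.norm) (hz : a ∣ (z * star z₀).im) (hw : a ∣ (w * star z₀).im) :
    a ∣ (z * star w).im := by
  have key : w.im * (z * star z₀).im - z.im * (w * star z₀).im = z₀.im * (z * star w).im := by
    simp only [Zsqrtd.im_mul, Zsqrtd.re_star, Zsqrtd.im_star]; ring
  exact ((isCoprime_im_norm h₀).of_isCoprime_of_dvd_right ha).symm.dvd_of_dvd_mul_left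
    (key ▸ dvd_sub (hz.mul_left _) (hw.mul_left _))

lemma dvd_two_of_dvd_im_mul_star_of_dvd_im_mul {a : ℤ} {z w : ℤ√d} (hd : Squarefree d)
    (hz : IsCoprime z.re z.im) (hw : IsCoprime w.re w.im) (hzw : z.norm = w.norm)
    (ha : a ^ 2 ∣ w.norm) (h₁ : a ∣ (z * star w).im) (h₂ : a ∣ (z * w).im) : a ∣ 2 := by
  have haw : a ∣ w.norm := (dvd_pow_self a two_ne_zero).trans ha
  have h_re : a ∣ 2 * w.re := by
    have key : (z * star w).im + (z * w).im = z.im * (2 * w.re) := by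
      simp only [Zsqrtd.im_mul, Zsqrtd.re_star, Zsqrtd.im_star]; ring
    exact ((isCoprime_im_norm hz).of_isCoprime_of_dvd_right (hzw ▸ haw)).symm.dvd_of_dvd_mul_left
      (key ▸ dvd_add h₁ h₂)
  have h_sq : a ^ 2 ∣ w.im ^ 2 * (4 * d) := by
    have key : (2 * w.re) ^ 2 - 4 * w.norm = w.im ^ 2 * (4 * d) := by rw [Zsqrtd.norm_def]; ring
    exact key ▸ dvd_sub (pow_dvd_pow_of_dvd h_re 2) (ha.mul_left 4)
  have : IsCoprime (a ^ 2) (w.im ^ 2) :=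
    ((isCoprime_im_norm hw).of_isCoprime_of_dvd_right haw).symm.pow
  exact dvd_two_of_sq_dvd_four_mul hd (this.dvd_of_dvd_mul_left h_sq)

-- Writing `M = g * e` with `g` the common gcd, both `g` and `e` divide `(z * star w).im`, and
-- squarefreeness of `d` forces `gcd g e ∣ 2`.
lemma norm_dvd_two_mul_im_mul_star {M : ℤ} {z₀ z w : ℤ√d} (hd : Squarefree d) (hM : M ≠ 0)
    (h₀ : IsCoprime z₀.re z₀.im) (hz : IsCoprime z.re z.im)
    (hz₀M : z₀.norm = M) (hzM : z.norm = M) (hwM : w.norm = M)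
    (hgcd : Int.gcd M (z * star z₀).im = Int.gcd M (w * star z₀).im) :
    M ∣ 2 * (z * star w).im := by
  obtain ⟨e, hMe⟩ : (Int.gcd M (z * star z₀).im : ℤ) ∣ M := Int.gcd_dvd_left ..
  have dvd_im_mul (y : ℤ√d) (hy : y.norm = M)
      (hyz : Int.gcd M (y * star z₀).im = Int.gcd M (z * star z₀).im) : e ∣ (y * z₀).im := by
    have hdvd : M ∣ Int.gcd M (y * star z₀).im * (y * z₀).im :=
      dvd_gcd_mul_of_dvd_mul (hy ▸ norm_dvd_im_mul_star_mul_im_mul (hy.trans hz₀M.symm))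
    rw [hyz] at hdvd
    exact (mul_dvd_mul_iff_left (left_ne_zero_of_mul (hMe ▸ hM))).1 (hMe ▸ hdvd)
  have hez : e ∣ (z * z₀).im := dvd_im_mul z hzM rfl
  have hew : e ∣ (w * z₀).im := dvd_im_mul w hwM hgcd.symm
  have hgz : (Int.gcd M (z * star z₀).im : ℤ) ∣ (z * star z₀).im := Int.gcd_dvd_right ..
  have hgw : (Int.gcd M (z * star z₀).im : ℤ) ∣ (w * star z₀).im := hgcd ▸ Int.gcd_dvd_right ..
  generalize (Int.gcd M (z * star z₀).im : ℤ) = g at hMe hgz hgw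
  have hg : g ∣ (z * star w).im :=
    dvd_im_mul_star_of_dvd h₀ (hz₀M ▸ Dvd.intro _ hMe.symm) hgz hgw
  have he : e ∣ (z * star w).im := by
    refine dvd_im_mul_star_of_dvd (z₀ := star z₀) (by simpa using h₀.neg_right) ?_ ?_ ?_
    · exact Zsqrtd.norm_conj z₀ ▸ hz₀M ▸ Dvd.intro_left _ hMe.symm
    · rwa [star_star]
    · rwa [star_star]
  have hge : gcd g e ∣ 2 := by
    refine dvd_two_of_dvd_im_mul_star_of_dvd_im_mul hd hz h₀ (hzM.trans hz₀M.symm) ?_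
      ((gcd_dvd_left g e).trans hgz) ((gcd_dvd_right g e).trans hez)
    rw [hz₀M, hMe, sq]
    exact mul_dvd_mul (gcd_dvd_left g e) (gcd_dvd_right g e)
  calc M = g * e := hMe
    _ ∣ gcd g e * lcm g e := (gcd_mul_lcm g e).symm.dvd
    _ ∣ 2 * (z * star w).im := mul_dvd_mul hge (lcm_dvd hg he)

lemma exists_norm_eq_four_of_dvd_im {M : ℤ} {z w : ℤ√d} (hM : M ≠ 0) (hz : z.norm = M)
    (hw : w.norm = M) (h : M ∣ 2 * (z * star w).im) :
    ∃ u : ℤ√d, u.norm = 4 ∧ 2 * z = u * w := by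
  have hnorm : (2 * (z * star w) : ℤ√d).norm = 4 * M ^ 2 := by
    rw [Zsqrtd.norm_mul, Zsqrtd.norm_mul, Zsqrtd.norm_conj, hz, hw]
    simp only [Zsqrtd.norm_def, Zsqrtd.re_ofNat, Zsqrtd.im_ofNat]; ring
  have h_im : M ∣ (2 * (z * star w) : ℤ√d).im := by simpa using h
  have h_re : M ∣ (2 * (z * star w) : ℤ√d).re := by
    have key : (2 * (z * star w) : ℤ√d).re ^ 2 =
        4 * M ^ 2 + d * (2 * (z * star w) : ℤ√d).im ^ 2 := by
      rw [Zsqrtd.norm_def] at hnorm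
      linear_combination hnorm
    rw [← Int.pow_dvd_pow_iff two_ne_zero, key]
    exact dvd_add (dvd_mul_left ..) ((pow_dvd_pow_of_dvd h_im 2).mul_left d)
  obtain ⟨u, hu⟩ := (Zsqrtd.intCast_dvd M _).2 ⟨h_re, h_im⟩
  refine ⟨u, ?_, ?_⟩
  · rw [hu, Zsqrtd.norm_mul, Zsqrtd.norm_intCast] at hnorm
    exact mul_left_cancel₀ (pow_ne_zero 2 hM) (by linear_combination hnorm)
  · have hww : (M : ℤ√d) = w * star w := hw ▸ Zsqrtd.norm_eq_mul_conj w
    refine Zsqrtd.eq_of_smul_eq_smul_left hM ?_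
    linear_combination w * hu + 2 * z * hww

lemma card_norm_eq_four_le (hd : d < 0) {S : Finset (ℤ√d)} (hS : ∀ u ∈ S, u.norm = 4) :
    S.card ≤ 25 := by
  have maps : Set.MapsTo (fun u : ℤ√d ↦ (u.re, u.im)) S
      (Finset.Icc (-2 : ℤ) 2 ×ˢ Finset.Icc (-2 : ℤ) 2 : Finset (ℤ × ℤ)) := by
    intro u hu
    have h := hS u hu
    rw [Zsqrtd.norm_def] at h
    simp only [Finset.coe_product, Finset.coe_Icc, Set.mem_prod, Set.mem_Icc]
    refine ⟨⟨?_, ?_⟩, ?_, ?_⟩ <;> nlinarith [mul_self_nonneg u.re, mul_self_nonneg u.im]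
  exact Finset.card_le_card_of_injOn _ maps fun u _ v _ h ↦
    Zsqrtd.ext (congrArg Prod.fst h) (congrArg Prod.snd h)

lemma card_primitive_norm_eq_le (hd : d < 0) (hsq : Squarefree d) {M : ℕ} (hM : M ≠ 0)
    {S : Finset (ℤ√d)} (hS : ∀ z ∈ S, z.norm = M ∧ IsCoprime z.re z.im) :
    S.card ≤ 25 * M.divisors.card := by
  classical
  rcases S.eq_empty_or_nonempty with rfl | ⟨z₀, hz₀⟩
  · simp only [Finset.card_empty, Nat.zero_le]
  have hM' : (M : ℤ) ≠ 0 := Nat.cast_ne_zero.2 hM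
  refine Finset.card_le_mul_card_image_of_maps_to (f := fun z ↦ Int.gcd M (z * star z₀).im)
    (fun z _ ↦ Nat.mem_divisors.2 ⟨Int.natCast_dvd_natCast.1 (Int.gcd_dvd_left ..), hM⟩) 25
    fun g _ ↦ ?_
  set F := S.filter fun z ↦ Int.gcd M (z * star z₀).im = g
  rcases F.eq_empty_or_nonempty with hF' | ⟨w, hw⟩
  · simp only [hF', Finset.card_empty, Nat.zero_le]
  have hFS {z} (hz : z ∈ F) := Finset.mem_filter.1 hz
  have associate : ∀ z ∈ F, ∃ u : ℤ√d, u.norm = 4 ∧ 2 * z = u * w := fun z hz ↦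
    exists_norm_eq_four_of_dvd_im hM' (hS z (hFS hz).1).1 (hS w (hFS hw).1).1
      (norm_dvd_two_mul_im_mul_star hsq hM' (hS z₀ hz₀).2 (hS z (hFS hz).1).2 (hS z₀ hz₀).1
        (hS z (hFS hz).1).1 (hS w (hFS hw).1).1 ((hFS hz).2.trans (hFS hw).2.symm))
  choose! u hu_norm hu using associate
  have u_inj : Set.InjOn u F := fun z hz z' hz' h ↦
    Zsqrtd.eq_of_smul_eq_smul_left (two_ne_zero (α := ℤ)) <| by
      push_cast; rw [hu z hz, hu z' hz', h]
  rw [← Finset.card_image_of_injOn u_inj]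
  exact card_norm_eq_four_le hd (Finset.forall_mem_image.2 hu_norm)

lemma card_norm_eq_le_of_squarefree (hd : d < 0) (hsq : Squarefree d) {M : ℕ} (hM : M ≠ 0)
    {S : Finset (ℤ√d)} (hS : ∀ z ∈ S, z.norm = M) :
    S.card ≤ 25 * M.divisors.card * M.divisors.card := by
  classical
  have primitive_part : ∀ z ∈ S, ∃ y : ℤ√d, z = ((Int.gcd z.re z.im : ℤ) : ℤ√d) * y ∧
      IsCoprime y.re y.im := fun z hz ↦ Zsqrtd.exists_coprime_of_gcd_pos <|
    (Zsqrtd.gcd_pos_iff z).2 fun h ↦ hM <| by simpa [h, eq_comm] using hS z hz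
  choose! y hy hy_coprime using primitive_part
  have norm_y : ∀ z ∈ S, (M : ℤ) = (Int.gcd z.re z.im : ℤ) ^ 2 * (y z).norm := fun z hz ↦ by
    conv_lhs => rw [← hS z hz, hy z hz]
    rw [Zsqrtd.norm_mul, Zsqrtd.norm_intCast, sq]
  refine Finset.card_le_mul_card_image_of_maps_to (f := fun z : ℤ√d ↦ Int.gcd z.re z.im)
    (fun z hz ↦ Nat.mem_divisors.2 ⟨?_, hM⟩) _ fun g hg ↦ ?_
  · rw [← Int.natCast_dvd_natCast, norm_y z hz, sq, mul_assoc]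
    exact dvd_mul_right _ _
  have hg₀ : (g : ℤ) ≠ 0 := Nat.cast_ne_zero.2 (Nat.pos_of_mem_divisors hg).ne'
  set F := S.filter fun z ↦ Int.gcd z.re z.im = g
  have hFS {z} (hz : z ∈ F) := Finset.mem_filter.1 hz
  rcases F.eq_empty_or_nonempty with hF' | ⟨w, hw⟩
  · simp only [hF', Finset.card_empty, Nat.zero_le]
  obtain ⟨m, hm⟩ := Int.eq_ofNat_of_zero_le ((y w).norm_nonneg hd.le)
  have hMm : (M : ℤ) = g ^ 2 * m := by rw [norm_y w (hFS hw).1, (hFS hw).2, hm]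
  have hmM : m ∣ M := Int.natCast_dvd_natCast.1 (Dvd.intro_left _ hMm.symm)
  have y_inj : Set.InjOn y F := fun z hz z' hz' h ↦ by
    rw [hy z (hFS hz).1, hy z' (hFS hz').1, (hFS hz).2, (hFS hz').2, h]
  rw [← Finset.card_image_of_injOn y_inj]
  calc (F.image y).card ≤ 25 * m.divisors.card := by
        refine card_primitive_norm_eq_le hd hsq (ne_zero_of_dvd_ne_zero hM hmM)
          (Finset.forall_mem_image.2 fun z hz ↦ ⟨?_, hy_coprime z (hFS hz).1⟩)
        have hMz := norm_y z (hFS hz).1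
        rw [(hFS hz).2, hMm] at hMz
        exact (mul_left_cancel₀ (pow_ne_zero 2 hg₀) hMz).symm
    _ ≤ 25 * M.divisors.card := by
        gcongr

-- An imaginary quadratic order embeds into the one of squarefree discriminant parameter, by
-- `√d = b * √(d / b ^ 2)`.
lemma card_norm_eq_le (hd : d < 0) {M : ℕ} (hM : M ≠ 0) {S : Finset (ℤ√d)}
    (hS : ∀ z ∈ S, z.norm = M) : S.card ≤ 25 * M.divisors.card * M.divisors.card := by
  classical
  obtain ⟨a, b, hab, ha⟩ := Nat.sq_mul_squarefree d.natAbs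
  have hd_eq : d = b ^ 2 * -a := by
    rw [← neg_eq_iff_eq_neg.2 (Int.ofNat_natAbs_of_nonpos hd.le), ← hab]; push_cast; ring
  have hb : (b : ℤ) ≠ 0 := by rintro hb; simp [hd_eq, hb] at hd
  have ha' : Squarefree (-a : ℤ) := by
    rwa [← Int.squarefree_natAbs, Int.natAbs_neg, Int.natAbs_natCast]
  let φ : ℤ√d → ℤ√(-a) := fun z ↦ ⟨z.re, b * z.im⟩
  have φ_inj : Function.Injective φ := fun z w h ↦ by
    obtain ⟨h_re, h_im⟩ := Zsqrtd.ext_iff.1 h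
    exact Zsqrtd.ext h_re (mul_left_cancel₀ hb h_im)
  rw [← Finset.card_image_of_injective S φ_inj]
  refine card_norm_eq_le_of_squarefree (neg_lt_zero.2 ?_) ha' hM (Finset.forall_mem_image.2 ?_)
  · exact_mod_cast Nat.pos_of_ne_zero ha.ne_zero
  · intro z hz
    rw [← hS z hz, Zsqrtd.norm_def, Zsqrtd.norm_def]
    linear_combination (z.im ^ 2) * hd_eq

end Zsqrtd

theorem exists_card_norm_eq_le_mul_rpow {ε : ℝ} (hε : 0 < ε) :
    ∃ C : ℝ, 0 < C ∧ ∀ d < (0 : ℤ), ∀ (M : ℤ) (W : ℝ), 1 ≤ W → M ≤ W →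
      ∀ S : Finset (ℤ√d), (∀ z ∈ S, z.norm = M) → (S.card : ℝ) ≤ C * W ^ ε := by
  obtain ⟨K, hK, hdiv⟩ := exists_card_divisors_le_mul_rpow (half_pos hε)
  refine ⟨25 * K ^ 2, by positivity, fun d hd M W hW hMW S hS ↦ ?_⟩
  have hWε : 1 ≤ W ^ ε := Real.one_le_rpow hW hε.le
  rcases S.eq_empty_or_nonempty with rfl | ⟨z, hz⟩
  · simp only [Finset.card_empty, Nat.cast_zero]; positivity
  obtain ⟨m, rfl⟩ := Int.eq_ofNat_of_zero_le (hS z hz ▸ z.norm_nonneg hd.le)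
  rcases eq_or_ne m 0 with rfl | hm
  · have : S.card ≤ 1 := Finset.card_le_one_iff.2 fun hx hy ↦ by
      rw [(Zsqrtd.norm_eq_zero_iff hd _).1 (hS _ hx), (Zsqrtd.norm_eq_zero_iff hd _).1 (hS _ hy)]
    calc (S.card : ℝ) ≤ 1 := by exact_mod_cast this
      _ ≤ 25 * K ^ 2 * W ^ ε :=
        one_le_mul_of_one_le_of_one_le (by nlinarith) hWε
  · have hτ : (m.divisors.card : ℝ) ≤ K * W ^ (ε / 2) :=
      (hdiv m hm).trans (by gcongr; exact_mod_cast hMW)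
    calc (S.card : ℝ) ≤ 25 * m.divisors.card * m.divisors.card := by
          exact_mod_cast card_norm_eq_le hd hm hS
      _ ≤ 25 * (K * W ^ (ε / 2)) * (K * W ^ (ε / 2)) := by gcongr
      _ = 25 * K ^ 2 * (W ^ (ε / 2) * W ^ (ε / 2)) := by ring
      _ = 25 * K ^ 2 * W ^ ε := by rw [← Real.rpow_add (by linarith), add_halves]

/-! ### Condensation of symmetric matrices -/

section Condensation

variable {R : Type*} {n : ℕ}

/-- Chiò's pivotal condensation of `B`: the Schur complement of the entry `B 0 0`, multiplied by
`B 0 0` so that it is defined over any commutative ring. -/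
def condensation [CommRing R] (B : Matrix (Fin (n + 1)) (Fin (n + 1)) R) :
    Matrix (Fin n) (Fin n) R :=
  B 0 0 • B.submatrix Fin.succ Fin.succ - vecMulVec (fun i ↦ B i.succ 0) (fun j ↦ B 0 j.succ)

section CommRing

variable [CommRing R] {B : Matrix (Fin (n + 1)) (Fin (n + 1)) R}

lemma condensation_apply (B : Matrix (Fin (n + 1)) (Fin (n + 1)) R) (i j : Fin n) :
    condensation B i j = B 0 0 * B i.succ j.succ - B i.succ 0 * B 0 j.succ := rfl

lemma isSymm_condensation (hB : B.IsSymm) : (condensation B).IsSymm := by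
  ext i j
  rw [transpose_apply, condensation_apply, condensation_apply, hB.apply i.succ j.succ,
    hB.apply 0 j.succ, hB.apply i.succ 0, mul_comm (B i.succ 0)]

lemma mul_det_condensation (B : Matrix (Fin (n + 1)) (Fin (n + 1)) R) :
    B 0 0 * (condensation B).det = B 0 0 ^ n * B.det := by
  let scaled : Matrix (Fin (n + 1)) (Fin (n + 1)) R :=
    of fun i j ↦ (Fin.cons 1 fun _ ↦ B 0 0 : Fin (n + 1) → R) i * B i j
  let cleared : Matrix (Fin (n + 1)) (Fin (n + 1)) R :=
    of (Fin.cons (B 0) fun i j ↦ B 0 0 * B i.succ j - B i.succ 0 * B 0 j)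
  have det_scaled : scaled.det = B 0 0 ^ n * B.det := by
    rw [det_mul_column, Fin.prod_univ_succ]
    simp
  have det_cleared : cleared.det = B 0 0 * (condensation B).det := by
    rw [det_succ_column_zero, Fin.sum_univ_succ, Finset.sum_eq_zero]
    · simp only [Fin.coe_ofNat_eq_mod, Nat.zero_mod, pow_zero, of_apply, Fin.cons_zero, one_mul,
        Fin.succAbove_zero, add_zero, condensation, cleared]
      rfl
    · intro i _
      simp [cleared, mul_comm]
  rw [← det_cleared, ← det_scaled]
  refine (det_eq_of_forall_row_eq_smul_add_const
    (Fin.cons 0 fun i ↦ B i.succ 0 : Fin (n + 1) → R) 0 rfl fun i j ↦ ?_).symm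
  cases i using Fin.cases <;> simp [scaled, cleared]

lemma mulVec_zero_eq (B : Matrix (Fin (n + 1)) (Fin (n + 1)) R) (x : Fin (n + 1) → R) :
    (B *ᵥ x) 0 = B 0 0 * x 0 + (fun j ↦ B 0 j.succ) ⬝ᵥ Fin.tail x := by
  rw [mulVec, dotProduct, Fin.sum_univ_succ]
  rfl

lemma dotProduct_mulVec_eq_add_condensation (hB : B.IsSymm) (x : Fin (n + 1) → R) :
    B 0 0 * (x ⬝ᵥ B *ᵥ x) = (B *ᵥ x) 0 ^ 2 + Fin.tail x ⬝ᵥ condensation B *ᵥ Fin.tail x := by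
  set r : Fin n → R := fun j ↦ B 0 j.succ with hr
  have hc : (fun i : Fin n ↦ B i.succ 0) = r := funext fun i ↦ hB.apply 0 i.succ
  have h_tail : Fin.tail (B *ᵥ x) = x 0 • r + B.submatrix Fin.succ Fin.succ *ᵥ Fin.tail x := by
    ext i
    simp only [Fin.tail, mulVec, dotProduct, Fin.sum_univ_succ, hB.apply 0 i.succ, hr,
      Pi.add_apply, Pi.smul_apply, smul_eq_mul, submatrix_apply, mul_comm (x 0)]
  have h_form : x ⬝ᵥ B *ᵥ x = x 0 * (B *ᵥ x) 0 + Fin.tail x ⬝ᵥ Fin.tail (B *ᵥ x) :=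
    Fin.sum_univ_succ _
  rw [h_form, h_tail, mulVec_zero_eq, condensation, hc, sub_mulVec, smul_mulVec, vecMulVec_mulVec,
    dotProduct_add, dotProduct_sub, dotProduct_smul, dotProduct_smul, dotProduct_smul,
    dotProduct_comm (Fin.tail x) r]
  simp only [smul_eq_mul, MulOpposite.smul_eq_mul_unop, MulOpposite.unop_op]
  ring

/-- The block-diagonal matrix `diag(1, V)`, a change of variables fixing the first one. -/
def oneBlock (V : Matrix (Fin n) (Fin n) R) : Matrix (Fin (n + 1)) (Fin (n + 1)) R :=
  of (Fin.cons (Fin.cons 1 0) fun i ↦ Fin.cons 0 (V i))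

lemma det_oneBlock (V : Matrix (Fin n) (Fin n) R) : (oneBlock V).det = V.det := by
  rw [det_succ_column_zero, Fin.sum_univ_succ, Finset.sum_eq_zero]
  · simp only [Fin.coe_ofNat_eq_mod, Nat.zero_mod, pow_zero, oneBlock, of_apply, Fin.cons_zero,
      mul_one, Fin.succAbove_zero, one_mul, add_zero]
    rfl
  · intro i _
    simp [oneBlock]

lemma oneBlock_conj_zero_zero (B : Matrix (Fin (n + 1)) (Fin (n + 1)) R)
    (V : Matrix (Fin n) (Fin n) R) : ((oneBlock V)ᵀ * B * oneBlock V) 0 0 = B 0 0 := by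
  simp [oneBlock, mul_apply, Fin.sum_univ_succ]

lemma condensation_oneBlock_conj (B : Matrix (Fin (n + 1)) (Fin (n + 1)) R)
    (V : Matrix (Fin n) (Fin n) R) :
    condensation ((oneBlock V)ᵀ * B * oneBlock V) = Vᵀ * condensation B * V := by
  have h_col : (fun i : Fin n ↦ ((oneBlock V)ᵀ * B * oneBlock V) i.succ 0) =
      Vᵀ *ᵥ fun i ↦ B i.succ 0 := by
    ext i
    simp [oneBlock, mul_apply, Fin.sum_univ_succ, mulVec, dotProduct]
  have h_row : (fun j : Fin n ↦ ((oneBlock V)ᵀ * B * oneBlock V) 0 j.succ) =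
      (fun j ↦ B 0 j.succ) ᵥ* V := by
    ext j
    simp [oneBlock, mul_apply, Fin.sum_univ_succ, vecMul, dotProduct]
  have h_block : ((oneBlock V)ᵀ * B * oneBlock V).submatrix Fin.succ Fin.succ =
      Vᵀ * B.submatrix Fin.succ Fin.succ * V := by
    ext i j
    simp [oneBlock, mul_apply, Fin.sum_univ_succ]
  rw [condensation, oneBlock_conj_zero_zero, h_col, h_row, h_block, condensation, mul_sub, sub_mul,
    Matrix.mul_smul, Matrix.smul_mul, mul_vecMulVec, vecMulVec_mul]

end CommRing

lemma posDef_condensation [CommRing R] [LinearOrder R] [IsStrictOrderedRing R] [StarRing R]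
    [TrivialStar R] {B : Matrix (Fin (n + 1)) (Fin (n + 1)) R} (hB : B.PosDef) :
    (condensation B).PosDef := by
  have hsymm : B.IsSymm := isHermitian_iff_isSymm.1 hB.isHermitian
  refine PosDef.of_dotProduct_mulVec_pos
    (isHermitian_iff_isSymm.2 (isSymm_condensation hsymm)) fun y hy ↦ ?_
  have hB₀ : 0 < B 0 0 := hB.diag_pos
  -- The lift of `B 0 0 • y` that is `B`-orthogonal to the first coordinate vector.
  let x : Fin (n + 1) → R := Fin.cons (-((fun j ↦ B 0 j.succ) ⬝ᵥ y)) (B 0 0 • y)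
  have hx : x ≠ 0 := fun h ↦ hy <| smul_right_injective _ hB₀.ne' <| by
    simp only [smul_zero]; exact congrArg Fin.tail h
  have hx₀ : (B *ᵥ x) 0 = 0 := by
    rw [mulVec_zero_eq]
    simp [x, dotProduct_smul]
  have key := dotProduct_mulVec_eq_add_condensation hsymm x
  rw [hx₀, show Fin.tail x = B 0 0 • y from rfl, mulVec_smul, smul_dotProduct, dotProduct_smul,
    zero_pow two_ne_zero, zero_add, smul_eq_mul, smul_eq_mul] at key
  have hpos : 0 < x ⬝ᵥ B *ᵥ x := by simpa using hB.dotProduct_mulVec_pos hx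
  have : 0 < y ⬝ᵥ condensation B *ᵥ y :=
    (mul_pos_iff_of_pos_left hB₀).1 (mul_left_cancel₀ hB₀.ne' key ▸ hpos)
  simpa using this

end Condensation

/-! ### Hermite reduction -/

/-- Hermite reducedness, in the style of Korkine and Zolotarev, of the Gram matrix of a lattice
basis: the projections of the other basis vectors orthogonal to the first vector `b` have squared
norm at least `3 / 4 * ‖b‖ ^ 2`, and the projected basis is Hermite reduced. Squared norms of
projections are multiplied by `B 0 0 = ‖b‖ ^ 2`, so that `condensation B` is their Gram matrix. -/
def IsHermiteReduced : ∀ {n : ℕ}, Matrix (Fin n) (Fin n) ℤ → Prop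
  | 0, _ => True
  | _ + 1, B => (∀ i, 3 * B 0 0 ^ 2 ≤ 4 * condensation B i i) ∧ IsHermiteReduced (condensation B)

lemma three_mul_sq_le_of_forall_le {a b c : ℤ} (ha : 0 < a)
    (h : ∀ m : ℤ, a ≤ c + 2 * m * b + m ^ 2 * a) : 3 * a ^ 2 ≤ 4 * (a * c - b ^ 2) := by
  obtain ⟨m, h₁, h₂⟩ : ∃ m : ℤ, -a ≤ 2 * (b + m * a) ∧ 2 * (b + m * a) ≤ a := by
    refine ⟨-((2 * b + a) / (2 * a)), ?_⟩
    have := Int.emod_add_mul_ediv (2 * b + a) (2 * a)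
    have := Int.emod_nonneg (2 * b + a) (show 2 * a ≠ 0 by lia)
    have := Int.emod_lt_of_pos (2 * b + a) (show 0 < 2 * a by lia)
    constructor <;> nlinarith
  have h_sq : (2 * (b + m * a)) ^ 2 ≤ a ^ 2 := sq_le_sq' h₁ h₂
  nlinarith [mul_le_mul_of_nonneg_left (h m) ha.le]

lemma posDef_conj {n : ℕ} {A U : Matrix (Fin n) (Fin n) ℤ} (hA : A.PosDef) (hU : IsUnit U.det) :
    (Uᵀ * A * U).PosDef := by
  rw [← conjTranspose_eq_transpose_of_trivial]
  exact hA.conjTranspose_mul_mul_same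
    (mulVec_injective_of_isUnit ((isUnit_iff_isUnit_det U).2 hU))

lemma exists_isUnit_det_conj_zero_zero_eq {n : ℕ} {B : Matrix (Fin (n + 1)) (Fin (n + 1)) ℤ}
    (hB : B.IsSymm) (j : Fin n) (m : ℤ) : ∃ U : Matrix (Fin (n + 1)) (Fin (n + 1)) ℤ,
      IsUnit U.det ∧
        (Uᵀ * B * U) 0 0 = B j.succ j.succ + 2 * m * B 0 j.succ + m ^ 2 * B 0 0 := by
  have hj : (0 : Fin (n + 1)) ≠ j.succ := (Fin.succ_ne_zero j).symm
  refine ⟨(transvection 0 j.succ m).submatrix id (Equiv.swap 0 j.succ), ?_, ?_⟩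
  · rw [det_permute', det_transvection_of_ne _ _ hj, mul_one]
    exact (Equiv.Perm.sign _).isUnit
  · have h_transpose : (transvection 0 j.succ m)ᵀ = transvection j.succ 0 m := by
      rw [transvection, transpose_add, transpose_one, transpose_single, transvection]
    change ((transvection 0 j.succ m)ᵀ * B * transvection 0 j.succ m) (Equiv.swap 0 j.succ 0)
      (Equiv.swap 0 j.succ 0) = _
    rw [Equiv.swap_apply_left, h_transpose, mul_transvection_apply_same,
      transvection_mul_apply_same, transvection_mul_apply_same, hB.apply 0 j.succ]
    ring

lemma exists_minimal_conj_zero_zero {n : ℕ} {A : Matrix (Fin (n + 1)) (Fin (n + 1)) ℤ}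
    (hA : A.PosDef) : ∃ U : Matrix (Fin (n + 1)) (Fin (n + 1)) ℤ, IsUnit U.det ∧
      ∀ V : Matrix (Fin (n + 1)) (Fin (n + 1)) ℤ, IsUnit V.det →
        (Uᵀ * A * U) 0 0 ≤ (Vᵀ * A * V) 0 0 := by
  obtain ⟨U, hU, hmin⟩ := exists_minimalFor_of_wellFoundedLT
    (fun U : Matrix (Fin (n + 1)) (Fin (n + 1)) ℤ ↦ IsUnit U.det)
    (fun U ↦ ((Uᵀ * A * U) 0 0).toNat) ⟨1, by simp⟩
  refine ⟨U, hU, fun V hV ↦ ?_⟩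
  have hV₀ : 0 < (Vᵀ * A * V) 0 0 := (posDef_conj hA hV).diag_pos
  have := hmin hV
  lia

lemma three_mul_sq_le_four_mul_condensation {n : ℕ} {B : Matrix (Fin (n + 1)) (Fin (n + 1)) ℤ}
    (hB : B.PosDef)
    (hmin : ∀ U : Matrix (Fin (n + 1)) (Fin (n + 1)) ℤ, IsUnit U.det →
      B 0 0 ≤ (Uᵀ * B * U) 0 0) (i : Fin n) :
    3 * B 0 0 ^ 2 ≤ 4 * condensation B i i := by
  have hB_symm : B.IsSymm := isHermitian_iff_isSymm.1 hB.isHermitian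
  rw [condensation_apply, hB_symm.apply 0 i.succ, ← sq]
  refine three_mul_sq_le_of_forall_le hB.diag_pos fun m ↦ ?_
  obtain ⟨U, hU, hU_eq⟩ := exists_isUnit_det_conj_zero_zero_eq hB_symm i m
  exact hU_eq ▸ hmin U hU

theorem exists_isHermiteReduced_conj {n : ℕ} {A : Matrix (Fin n) (Fin n) ℤ} (hA : A.PosDef) :
    ∃ U : Matrix (Fin n) (Fin n) ℤ, IsUnit U.det ∧ IsHermiteReduced (Uᵀ * A * U) := by
  induction n with
  | zero => exact ⟨1, by simp, trivial⟩
  | succ n ih =>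
    obtain ⟨U, hU, hmin⟩ := exists_minimal_conj_zero_zero hA
    have hB : (Uᵀ * A * U).PosDef := posDef_conj hA hU
    obtain ⟨V, hV, hV_reduced⟩ := ih (posDef_condensation hB)
    rw [← condensation_oneBlock_conj] at hV_reduced
    have conj_mul (W W' : Matrix (Fin (n + 1)) (Fin (n + 1)) ℤ) :
        (W * W')ᵀ * A * (W * W') = W'ᵀ * (Wᵀ * A * W) * W' := by
      simp only [transpose_mul, Matrix.mul_assoc]
    have hUV : IsUnit (U * oneBlock V).det := by
      rw [det_mul, det_oneBlock]; exact hU.mul hV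
    refine ⟨U * oneBlock V, hUV, ?_, conj_mul U _ ▸ hV_reduced⟩
    refine three_mul_sq_le_four_mul_condensation (posDef_conj hA hUV) fun W hW ↦ ?_
    calc ((U * oneBlock V)ᵀ * A * (U * oneBlock V)) 0 0 = (Uᵀ * A * U) 0 0 := by
          rw [conj_mul, oneBlock_conj_zero_zero]
      _ ≤ ((U * oneBlock V * W)ᵀ * A * (U * oneBlock V * W)) 0 0 :=
          hmin _ (by rw [det_mul]; exact hUV.mul hW)
      _ = _ := by rw [conj_mul]

/-! ### Counting integral points -/

lemma card_le_mul_card_image_of_card_fiber_le {α β : Type*} [DecidableEq β] (S : Finset α)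
    (f : α → β) {K : ℝ} (hK : ∀ b, ((S.filter (f · = b)).card : ℝ) ≤ K) :
    (S.card : ℝ) ≤ K * (S.image f).card := by
  calc (S.card : ℝ) = ∑ b ∈ S.image f, ((S.filter (f · = b)).card : ℝ) := by
        exact_mod_cast Finset.card_eq_sum_card_image f S
    _ ≤ (S.image f).card • K := Finset.sum_le_card_nsmul _ _ _ fun b _ ↦ hK b
    _ = K * (S.image f).card := by rw [nsmul_eq_mul, mul_comm]

lemma card_le_two_mul_sqrt_add_one {S : Finset ℤ} {c r : ℝ}
    (hS : ∀ z ∈ S, ((z : ℝ) + c) ^ 2 ≤ r) : (S.card : ℝ) ≤ 2 * √r + 1 := by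
  rcases S.eq_empty_or_nonempty with rfl | ⟨w, hw⟩
  · simp only [Finset.card_empty, Nat.cast_zero]; positivity
  have h_abs (z : ℤ) (hz : z ∈ S) : |(z : ℝ) + c| ≤ √r := Real.abs_le_sqrt (hS z hz)
  have h_sub : S ⊆ Finset.Icc ⌈-√r - c⌉ ⌊√r - c⌋ := fun z hz ↦ by
    obtain ⟨h₁, h₂⟩ := abs_le.1 (h_abs z hz)
    exact Finset.mem_Icc.2 ⟨Int.ceil_le.2 (by linarith), Int.le_floor.2 (by linarith)⟩
  obtain ⟨h_ceil, h_floor⟩ := Finset.mem_Icc.1 (h_sub hw)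
  have h_card : (S.card : ℤ) ≤ ⌊√r - c⌋ + 1 - ⌈-√r - c⌉ := by
    rw [← Int.card_Icc_of_le _ _ (by lia)]
    exact_mod_cast Finset.card_le_card h_sub
  calc (S.card : ℝ) ≤ ⌊√r - c⌋ + 1 - ⌈-√r - c⌉ := by exact_mod_cast h_card
    _ ≤ 2 * √r + 1 := by linarith [Int.floor_le (√r - c), Int.le_ceil (-√r - c)]

section PosDef

variable {n : ℕ}

lemma eq_of_tail_eq_of_mulVec_zero_eq {R : Type*} [CommRing R] [IsDomain R]
    {B : Matrix (Fin (n + 1)) (Fin (n + 1)) R} (hB : B 0 0 ≠ 0) {x y : Fin (n + 1) → R}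
    (h_tail : Fin.tail x = Fin.tail y) (h_zero : (B *ᵥ x) 0 = (B *ᵥ y) 0) : x = y := by
  rw [mulVec_zero_eq, mulVec_zero_eq, h_tail, add_left_inj] at h_zero
  rw [← Fin.cons_self_tail x, ← Fin.cons_self_tail y, h_tail, mul_left_cancel₀ hB h_zero]

variable {B : Matrix (Fin (n + 1)) (Fin (n + 1)) ℤ} {T : ℝ}

lemma tail_dotProduct_condensation_le (hB : B.PosDef) {x : Fin (n + 1) → ℤ}
    (hx : ((x ⬝ᵥ B *ᵥ x : ℤ) : ℝ) ≤ T) :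
    ((Fin.tail x ⬝ᵥ condensation B *ᵥ Fin.tail x : ℤ) : ℝ) ≤ B 0 0 * T := by
  have key := dotProduct_mulVec_eq_add_condensation (isHermitian_iff_isSymm.1 hB.isHermitian) x
  have hB₀ : 0 < (B 0 0 : ℝ) := by exact_mod_cast hB.diag_pos
  calc ((Fin.tail x ⬝ᵥ condensation B *ᵥ Fin.tail x : ℤ) : ℝ)
      ≤ ((B 0 0 * (x ⬝ᵥ B *ᵥ x) : ℤ) : ℝ) := by
        exact_mod_cast key ▸ le_add_of_nonneg_left (sq_nonneg _)
    _ ≤ B 0 0 * T := by rw [Int.cast_mul]; gcongr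

lemma mulVec_zero_sq_le (hB : B.PosDef) {x : Fin (n + 1) → ℤ}
    (hx : ((x ⬝ᵥ B *ᵥ x : ℤ) : ℝ) ≤ T) : (((B *ᵥ x) 0 : ℤ) : ℝ) ^ 2 ≤ B 0 0 * T := by
  have key := dotProduct_mulVec_eq_add_condensation (isHermitian_iff_isSymm.1 hB.isHermitian) x
  have hB₀ : 0 < (B 0 0 : ℝ) := by exact_mod_cast hB.diag_pos
  have h_nonneg : 0 ≤ Fin.tail x ⬝ᵥ condensation B *ᵥ Fin.tail x := by
    simpa using (posDef_condensation hB).posSemidef.dotProduct_mulVec_nonneg (Fin.tail x)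
  calc (((B *ᵥ x) 0 : ℤ) : ℝ) ^ 2 ≤ ((B 0 0 * (x ⬝ᵥ B *ᵥ x) : ℤ) : ℝ) := by
        exact_mod_cast key ▸ le_add_of_nonneg_right h_nonneg
    _ ≤ B 0 0 * T := by rw [Int.cast_mul]; gcongr

lemma card_le_mul_card_image_tail (hB : B.PosDef) {S : Finset (Fin (n + 1) → ℤ)}
    (hS : ∀ x ∈ S, ((x ⬝ᵥ B *ᵥ x : ℤ) : ℝ) ≤ T) :
    (S.card : ℝ) ≤ (2 * √(T / B 0 0) + 1) * (S.image Fin.tail).card := by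
  refine card_le_mul_card_image_of_card_fiber_le S _ fun y ↦ ?_
  have hB₀ : 0 < (B 0 0 : ℝ) := by exact_mod_cast hB.diag_pos
  set F := S.filter (Fin.tail · = y)
  have hF {x} (hx : x ∈ F) := Finset.mem_filter.1 hx
  have h_inj : Set.InjOn (fun x : Fin (n + 1) → ℤ ↦ x 0) F := fun x hx x' hx' h ↦ by
    rw [← Fin.cons_self_tail x, ← Fin.cons_self_tail x', (hF hx).2, (hF hx').2]
    exact congrArg (fun t : ℤ ↦ (Fin.cons t y : Fin (n + 1) → ℤ)) h
  rw [← Finset.card_image_of_injOn h_inj]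
  refine card_le_two_mul_sqrt_add_one (c := ((fun j ↦ B 0 j.succ) ⬝ᵥ y : ℤ) / B 0 0)
    (Finset.forall_mem_image.2 fun x hx ↦ ?_)
  have h_sq := mulVec_zero_sq_le hB (hS x (hF hx).1)
  rw [mulVec_zero_eq, (hF hx).2, Int.cast_add, Int.cast_mul] at h_sq
  rw [le_div_iff₀ hB₀, ← mul_le_mul_iff_right₀ hB₀]
  refine le_of_eq_of_le ?_ h_sq
  field_simp

lemma card_le_of_binary {B : Matrix (Fin 2) (Fin 2) ℤ} (hB : B.PosDef)
    {S : Finset (Fin 2 → ℤ)} (hS : ∀ x ∈ S, ((x ⬝ᵥ B *ᵥ x : ℤ) : ℝ) ≤ T) :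
    (S.card : ℝ) ≤ (2 * √(T / B 0 0) + 1) * (2 * √(B 0 0 * T / condensation B 0 0) + 1) := by
  have h_image : ((S.image Fin.tail).card : ℝ) ≤
      (2 * √(B 0 0 * T / condensation B 0 0) + 1) *
        (((S.image Fin.tail).image Fin.tail).card : ℝ) :=
    card_le_mul_card_image_tail (posDef_condensation hB) <| Finset.forall_mem_image.2 fun x hx ↦
      tail_dotProduct_condensation_le hB (hS x hx)
  have h_one : ((((S.image Fin.tail).image Fin.tail).card : ℕ) : ℝ) ≤ 1 := by
    exact_mod_cast Finset.card_le_one_of_subsingleton _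
  calc (S.card : ℝ) ≤ (2 * √(T / B 0 0) + 1) * (S.image Fin.tail).card :=
        card_le_mul_card_image_tail hB hS
    _ ≤ _ := by
        gcongr
        exact h_image.trans (mul_le_of_le_one_right (by positivity) h_one)

end PosDef

section Fibration

variable {n : ℕ} {B : Matrix (Fin (n + 2)) (Fin (n + 2)) ℤ}

/-- The element of `ℤ[√(-b)]`, with `b = condensation B 0 0`, whose norm is what completing squares
in the first two coordinates splits off from `B 0 0 * b` times the form of `B` at `x`. -/
def leadingElement (B : Matrix (Fin (n + 2)) (Fin (n + 2)) ℤ) (x : Fin (n + 2) → ℤ) :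
    ℤ√(-condensation B 0 0) :=
  ⟨(condensation B *ᵥ Fin.tail x) 0, (B *ᵥ x) 0⟩

lemma norm_leadingElement_add (hB : B.IsSymm) (x : Fin (n + 2) → ℤ) :
    (leadingElement B x).norm + Fin.tail (Fin.tail x) ⬝ᵥ
      condensation (condensation B) *ᵥ Fin.tail (Fin.tail x) =
    B 0 0 * condensation B 0 0 * (x ⬝ᵥ B *ᵥ x) := by
  have h₁ := dotProduct_mulVec_eq_add_condensation hB x
  have h₂ := dotProduct_mulVec_eq_add_condensation (isSymm_condensation hB) (Fin.tail x)
  rw [Zsqrtd.norm_def]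
  simp only [leadingElement]
  linear_combination -condensation B 0 0 * h₁ - h₂

lemma eq_of_leadingElement_eq (hB : B.PosDef) {x y : Fin (n + 2) → ℤ}
    (h_tail : Fin.tail (Fin.tail x) = Fin.tail (Fin.tail y))
    (h : leadingElement B x = leadingElement B y) : x = y := by
  obtain ⟨h_re, h_im⟩ := Zsqrtd.ext_iff.1 h
  exact eq_of_tail_eq_of_mulVec_zero_eq hB.diag_pos.ne'
    (eq_of_tail_eq_of_mulVec_zero_eq (posDef_condensation hB).diag_pos.ne' h_tail h_re) h_im

end Fibration

theorem exists_card_le_mul_rpow_mul_card_image {ε : ℝ} (hε : 0 < ε) :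
    ∃ C : ℝ, 0 < C ∧ ∀ {n : ℕ} {B : Matrix (Fin (n + 2)) (Fin (n + 2)) ℤ}, B.PosDef →
      ∀ {m : ℤ}, 0 < m → ∀ S : Finset (Fin (n + 2) → ℤ), (∀ x ∈ S, x ⬝ᵥ B *ᵥ x = m) →
        (S.card : ℝ) ≤ C * ((B 0 0 * condensation B 0 0 * m : ℤ) : ℝ) ^ ε *
          (S.image fun x ↦ Fin.tail (Fin.tail x)).card := by
  obtain ⟨C, hC, hcount⟩ := exists_card_norm_eq_le_mul_rpow hε
  refine ⟨C, hC, fun {n B} hB m hm S hS ↦ ?_⟩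
  refine card_le_mul_card_image_of_card_fiber_le S _ fun y ↦ ?_
  have hB' := posDef_condensation hB
  set F := S.filter fun x ↦ Fin.tail (Fin.tail x) = y
  have hF {x} (hx : x ∈ F) := Finset.mem_filter.1 hx
  have h_inj : Set.InjOn (leadingElement B) F := fun x hx x' hx' ↦
    eq_of_leadingElement_eq hB ((hF hx).2.trans (hF hx').2.symm)
  have h_pos : 0 < B 0 0 * condensation B 0 0 * m :=
    mul_pos (mul_pos hB.diag_pos hB'.diag_pos) hm
  have h_nonneg : 0 ≤ y ⬝ᵥ condensation (condensation B) *ᵥ y := by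
    simpa using (posDef_condensation hB').posSemidef.dotProduct_mulVec_nonneg y
  rw [← Finset.card_image_of_injOn h_inj]
  refine hcount _ (neg_lt_zero.2 hB'.diag_pos)
    (B 0 0 * condensation B 0 0 * m - y ⬝ᵥ condensation (condensation B) *ᵥ y) _
    (by exact_mod_cast h_pos) (by exact_mod_cast sub_le_self _ h_nonneg) _
    (Finset.forall_mem_image.2 fun x hx ↦ ?_)
  rw [eq_sub_iff_add_eq, ← (hF hx).2, ← hS x (hF hx).1]
  exact norm_leadingElement_add (isHermitian_iff_isSymm.1 hB.isHermitian) x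

/-! ### Reduced quaternary forms -/

lemma condensation_condensation_condensation_zero_zero {R : Type*} [CommRing R] [IsDomain R]
    {B : Matrix (Fin 4) (Fin 4) R} (h₁ : B 0 0 ≠ 0) (h₂ : condensation B 0 0 ≠ 0)
    (h₃ : condensation (condensation B) 0 0 ≠ 0) :
    condensation (condensation (condensation B)) 0 0 =
      B 0 0 ^ 2 * condensation B 0 0 * B.det := by
  have det₁ := mul_det_condensation B
  have det₂ := mul_det_condensation (condensation B)
  have det₃ := mul_det_condensation (condensation (condensation B))
  rw [det_fin_one, pow_one, mul_right_inj' h₃] at det₃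
  apply mul_left_cancel₀ (mul_ne_zero h₁ h₂)
  rw [det₃]
  linear_combination B 0 0 * det₂ + condensation B 0 0 ^ 2 * det₁

section HermiteInequalities

variable {a b c D : ℝ}

lemma sq_le_four_mul_of_hermite (hb : 0 < b) (hD : 0 < D)
    (h₁ : 3 * a ^ 2 ≤ 4 * b) (h₂ : 3 * b ^ 2 ≤ 4 * c) (h₃ : 3 * c ^ 2 ≤ 4 * (a ^ 2 * b * D)) :
    b ^ 2 ≤ 4 * D := by
  refine le_of_mul_le_mul_left ?_ (show 0 < 81 * b ^ 2 by positivity)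
  calc 81 * b ^ 2 * b ^ 2 = 9 * (3 * b ^ 2) ^ 2 := by ring
    _ ≤ 9 * (4 * c) ^ 2 := by gcongr
    _ = 48 * (3 * c ^ 2) := by ring
    _ ≤ 48 * (4 * (a ^ 2 * b * D)) := by gcongr
    _ = 64 * (b * D) * (3 * a ^ 2) := by ring
    _ ≤ 64 * (b * D) * (4 * b) := by gcongr
    _ ≤ 81 * b ^ 2 * (4 * D) := by nlinarith [mul_pos (pow_pos hb 2) hD]

lemma mul_le_two_mul_of_hermite (ha : 1 ≤ a) (hb : 0 < b) (h₁ : 3 * a ^ 2 ≤ 4 * b)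
    (h₂ : 3 * b ^ 2 ≤ 4 * c) : a * b ≤ 2 * c := by
  have : 3 * a ≤ 4 * b := by nlinarith
  nlinarith

lemma mul_le_eight_mul_of_hermite (ha : 1 ≤ a) (h₁ : 3 * a ^ 2 ≤ 4 * b) (hbD : b ^ 2 ≤ 4 * D) :
    a * b ≤ 8 * D := by
  nlinarith

lemma le_three_mul_of_hermite (ha : 0 < a) (hc : 0 < c) (hD : 0 < D) (hab : a * b ≤ 2 * c)
    (h₃ : 3 * c ^ 2 ≤ 4 * (a ^ 2 * b * D)) : c ≤ 3 * (a * D) := by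
  refine le_of_mul_le_mul_left ?_ (show 0 < 3 * c by positivity)
  calc 3 * c * c = 3 * c ^ 2 := by ring
    _ ≤ 4 * (a * D) * (a * b) := by linarith
    _ ≤ 4 * (a * D) * (2 * c) := by gcongr
    _ ≤ 3 * c * (3 * (a * D)) := by nlinarith [mul_pos hc (mul_pos ha hD)]

end HermiteInequalities

lemma two_mul_sqrt_add_one_mul_le {n r P Q : ℝ} (hn : 1 ≤ n) (hr : 0 ≤ r) (hP₀ : 0 ≤ P)
    (hP : P ≤ 9 * n) (hQ : Q ≤ 9 * n) (hPQ : P * Q ≤ 9 * r ^ 2) :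
    (2 * √P + 1) * (2 * √Q + 1) ≤ 13 * (r + √n) := by
  have sqrt_nine_mul (t : ℝ) : √(9 * t) = 3 * √t := by
    rw [Real.sqrt_mul (by norm_num), show (9 : ℝ) = 3 ^ 2 by norm_num,
      Real.sqrt_sq (by norm_num)]
  have hsP : √P ≤ 3 * √n := sqrt_nine_mul n ▸ Real.sqrt_le_sqrt hP
  have hsQ : √Q ≤ 3 * √n := sqrt_nine_mul n ▸ Real.sqrt_le_sqrt hQ
  have hsPQ : √P * √Q ≤ 3 * r := by
    rw [← Real.sqrt_mul hP₀, ← Real.sqrt_sq hr, ← sqrt_nine_mul]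
    exact Real.sqrt_le_sqrt hPQ
  have hsn : 1 ≤ √n := Real.one_le_sqrt.2 hn
  linarith

theorem two_mul_sqrt_add_one_mul_le_of_hermite {a b c D n : ℝ} (ha : 1 ≤ a) (hb : 0 < b)
    (hc : 0 < c) (hD : 0 < D) (hn : 1 ≤ n) (h₁ : 3 * a ^ 2 ≤ 4 * b) (h₂ : 3 * b ^ 2 ≤ 4 * c)
    (h₃ : 3 * c ^ 2 ≤ 4 * (a ^ 2 * b * D)) :
    (2 * √(a * b * (2 * n) / c) + 1) * (2 * √(c * (a * b * (2 * n)) / (a ^ 2 * b * D)) + 1) ≤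
      13 * (n * D ^ (-(1 : ℝ) / 4) + n ^ ((1 : ℝ) / 2)) := by
  have ha₀ : 0 < a := by linarith
  have hab := mul_le_two_mul_of_hermite ha hb h₁ h₂
  have hcD := le_three_mul_of_hermite ha₀ hc hD hab h₃
  have hbD : b ≤ 2 * √D := by
    have := Real.le_sqrt_of_sq_le (sq_le_four_mul_of_hermite hb hD h₁ h₂ h₃)
    rwa [show (4 : ℝ) = 2 ^ 2 by norm_num, Real.sqrt_mul (by norm_num),
      Real.sqrt_sq (by norm_num)] at this
  have h_root : (D ^ (-(1 : ℝ) / 4)) ^ 2 * √D = 1 := by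
    rw [Real.sqrt_eq_rpow, ← Real.rpow_mul_natCast hD.le, ← Real.rpow_add hD]
    norm_num
  rw [← Real.sqrt_eq_rpow]
  refine two_mul_sqrt_add_one_mul_le hn (by positivity) (by positivity) ?_ ?_ ?_
  · rw [div_le_iff₀ hc]
    nlinarith
  · rw [div_le_iff₀ (by positivity)]
    calc c * (a * b * (2 * n)) ≤ 3 * (a * D) * (a * b * (2 * n)) := by gcongr
      _ = 6 * (n * (a ^ 2 * b * D)) := by ring
      _ ≤ 9 * n * (a ^ 2 * b * D) := by
          linarith [show 0 ≤ n * (a ^ 2 * b * D) by positivity]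
  · calc a * b * (2 * n) / c * (c * (a * b * (2 * n)) / (a ^ 2 * b * D)) = 4 * n ^ 2 * b / D := by
          field_simp; ring
      _ ≤ 4 * n ^ 2 * (2 * √D) / D := by gcongr
      _ = 8 * (n * D ^ (-(1 : ℝ) / 4)) ^ 2 := by
          rw [div_eq_iff hD.ne']
          linear_combination -8 * n ^ 2 * √D * h_root +
            8 * n ^ 2 * (D ^ (-(1 : ℝ) / 4)) ^ 2 * Real.mul_self_sqrt hD.le
      _ ≤ 9 * (n * D ^ (-(1 : ℝ) / 4)) ^ 2 := by gcongr; norm_num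

lemma det_pos_of_posDef {R : Type*} [CommRing R] [LinearOrder R] [IsStrictOrderedRing R]
    [StarRing R] [TrivialStar R] {n : ℕ} {B : Matrix (Fin n) (Fin n) R} (hB : B.PosDef) :
    0 < B.det := by
  induction n with
  | zero => rw [det_fin_zero]; exact one_pos
  | succ n ih =>
    have hB₀ : 0 < B 0 0 := hB.diag_pos
    have key := mul_pos hB₀ (ih (posDef_condensation hB))
    rw [mul_det_condensation] at key
    exact (mul_pos_iff_of_pos_left (pow_pos hB₀ n)).1 key

lemma card_image_tail_tail_le {B : Matrix (Fin 4) (Fin 4) ℤ} (hB : B.PosDef) {T : ℝ}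
    {S : Finset (Fin 4 → ℤ)} (hS : ∀ x ∈ S, ((x ⬝ᵥ B *ᵥ x : ℤ) : ℝ) ≤ T) :
    ((S.image fun x ↦ Fin.tail (Fin.tail x)).card : ℝ) ≤
      (2 * √(B 0 0 * (condensation B 0 0 : ℤ) * T / (condensation (condensation B) 0 0 : ℤ)) + 1) *
        (2 * √((condensation (condensation B) 0 0 : ℤ) * (B 0 0 * (condensation B 0 0 : ℤ) * T) /
          (B 0 0 ^ 2 * (condensation B 0 0 : ℤ) * B.det)) + 1) := by
  have hB' := posDef_condensation hB
  have hB'' := posDef_condensation hB'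
  have h_last : ((condensation (condensation (condensation B)) 0 0 : ℤ) : ℝ) =
      B 0 0 ^ 2 * (condensation B 0 0 : ℤ) * B.det := by
    exact_mod_cast condensation_condensation_condensation_zero_zero hB.diag_pos.ne'
      hB'.diag_pos.ne' hB''.diag_pos.ne'
  rw [← h_last, mul_right_comm, mul_comm _ ((condensation B 0 0 : ℤ) : ℝ)]
  exact card_le_of_binary hB'' <| Finset.forall_mem_image.2 fun x hx ↦
    tail_dotProduct_condensation_le hB' (tail_dotProduct_condensation_le hB (hS x hx))

theorem exists_card_le_of_isHermiteReduced {ε : ℝ} (hε : 0 < ε) :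
    ∃ C : ℝ, 0 < C ∧ ∀ {B : Matrix (Fin 4) (Fin 4) ℤ}, B.PosDef → IsHermiteReduced B →
      ∀ {n : ℕ}, 0 < n → ∀ S : Finset (Fin 4 → ℤ), (∀ x ∈ S, x ⬝ᵥ B *ᵥ x = 2 * n) →
        (S.card : ℝ) ≤ C * ((n * B.det : ℝ) ^ ε *
          (n * (B.det : ℝ) ^ (-(1 : ℝ) / 4) + (n : ℝ) ^ ((1 : ℝ) / 2))) := by
  obtain ⟨C, hC, hcount⟩ := exists_card_le_mul_rpow_mul_card_image hε
  refine ⟨C * 16 ^ ε * 13, by positivity, fun {B} hB ⟨hred₁, hred₂, hred₃, _⟩ n hn S hS ↦ ?_⟩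
  have hB' := posDef_condensation hB
  have hB'' := posDef_condensation hB'
  have h_image := card_image_tail_tail_le hB (T := 2 * n) fun x hx ↦ by
    exact_mod_cast (hS x hx).le
  have h_last := condensation_condensation_condensation_zero_zero hB.diag_pos.ne'
    hB'.diag_pos.ne' hB''.diag_pos.ne'
  have hD : 0 < (B.det : ℝ) := by exact_mod_cast det_pos_of_posDef hB
  have hn₁ : 1 ≤ (n : ℝ) := by exact_mod_cast hn
  set a : ℤ := B 0 0
  set b : ℤ := condensation B 0 0
  set c : ℤ := condensation (condensation B) 0 0
  set D : ℤ := B.det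
  have ha : 1 ≤ (a : ℝ) := by exact_mod_cast (show 0 < a from hB.diag_pos)
  have hb : 0 < (b : ℝ) := by exact_mod_cast (show 0 < b from hB'.diag_pos)
  have hc : 0 < (c : ℝ) := by exact_mod_cast (show 0 < c from hB''.diag_pos)
  have h₁ : 3 * (a : ℝ) ^ 2 ≤ 4 * b := by exact_mod_cast hred₁ 0
  have h₂ : 3 * (b : ℝ) ^ 2 ≤ 4 * c := by exact_mod_cast hred₂ 0
  have h₃ : 3 * (c : ℝ) ^ 2 ≤ 4 * ((a : ℝ) ^ 2 * b * D) := by exact_mod_cast h_last ▸ hred₃ 0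
  have hab := mul_le_eight_mul_of_hermite ha h₁ (sq_le_four_mul_of_hermite hb hD h₁ h₂ h₃)
  calc (S.card : ℝ) ≤ C * ((a * b * (2 * n) : ℤ) : ℝ) ^ ε *
          (S.image fun x ↦ Fin.tail (Fin.tail x)).card := hcount hB (by positivity) S hS
    _ ≤ C * (16 * (n * D)) ^ ε *
          (13 * (n * (D : ℝ) ^ (-(1 : ℝ) / 4) + (n : ℝ) ^ ((1 : ℝ) / 2))) := by
        push_cast
        gcongr ?_ * ?_ ^ ε * ?_
        · nlinarith
        · exact h_image.trans
            (two_mul_sqrt_add_one_mul_le_of_hermite ha hb hc hD hn₁ h₁ h₂ h₃)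
    _ = _ := by
        rw [Real.mul_rpow (by norm_num) (by positivity)]
        ring

lemma dotProduct_conj_mulVec {R : Type*} [CommRing R] {n : ℕ} (A U : Matrix (Fin n) (Fin n) R)
    (x : Fin n → R) : x ⬝ᵥ (Uᵀ * A * U) *ᵥ x = (U *ᵥ x) ⬝ᵥ A *ᵥ (U *ᵥ x) := by
  rw [← mulVec_mulVec, ← mulVec_mulVec, dotProduct_mulVec, vecMul_transpose]

lemma det_conj_of_isUnit {n : ℕ} (A : Matrix (Fin n) (Fin n) ℤ) {U : Matrix (Fin n) (Fin n) ℤ}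
    (hU : IsUnit U.det) : (Uᵀ * A * U).det = A.det := by
  rw [det_mul, det_mul, det_transpose, mul_right_comm, Int.isUnit_mul_self hU, one_mul]

theorem exists_card_le_of_posDef {ε : ℝ} (hε : 0 < ε) :
    ∃ C : ℝ, 0 < C ∧ ∀ {A : Matrix (Fin 4) (Fin 4) ℤ}, A.PosDef →
      ∀ {n : ℕ}, 0 < n → ∀ S : Finset (Fin 4 → ℤ), (∀ x ∈ S, x ⬝ᵥ A *ᵥ x = 2 * n) →
        (S.card : ℝ) ≤ C * ((n * A.det : ℝ) ^ ε *
          (n * (A.det : ℝ) ^ (-(1 : ℝ) / 4) + (n : ℝ) ^ ((1 : ℝ) / 2))) := by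
  obtain ⟨C, hC, hcount⟩ := exists_card_le_of_isHermiteReduced hε
  refine ⟨C, hC, fun {A} hA n hn S hS ↦ ?_⟩
  obtain ⟨U, hU, hU_reduced⟩ := exists_isHermiteReduced_conj hA
  have h_inv (x : Fin 4 → ℤ) : U *ᵥ (U⁻¹ *ᵥ x) = x := by
    rw [mulVec_mulVec, mul_nonsing_inv U hU, one_mulVec]
  rw [← Finset.card_image_of_injective S (Function.LeftInverse.injective h_inv),
    ← det_conj_of_isUnit A hU]
  refine hcount (posDef_conj hA hU) hU_reduced hn _ (Finset.forall_mem_image.2 fun x hx ↦ ?_)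
  rw [dotProduct_conj_mulVec, h_inv, hS x hx]

/-! ### The representation number -/

lemma natCard_subtype_le_of_forall_finset {α : Type*} {P : α → Prop} {b : ℝ} (hb : 0 ≤ b)
    (h : ∀ S : Finset α, (∀ x ∈ S, P x) → (S.card : ℝ) ≤ b) : (Nat.card {x // P x} : ℝ) ≤ b := by
  rcases finite_or_infinite {x // P x} with h_fin | h_inf
  · have h_finite : {x | P x}.Finite := h_fin
    have : {x | P x}.ncard = Nat.card {x // P x} := rfl
    rw [← this, Set.ncard_eq_toFinset_card _ h_finite]
    exact h _ fun x hx ↦ h_finite.mem_toFinset.1 hx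
  · rwa [Nat.card_eq_zero_of_infinite, Nat.cast_zero]

lemma dotProduct_mulVec_eq_two_mul_Qval {A : Matrix (Fin 4) (Fin 4) ℤ} (hA : IsGram A)
    (x : Fin 4 → ℤ) : x ⬝ᵥ A *ᵥ x = 2 * Qval A x := by
  have h_diag (i) : A i i = 2 * (A i i / 2) := (Int.mul_ediv_cancel' (hA.2 i)).symm
  have h_offdiag : ∑ i, ∑ j ∈ Finset.Ioi i, A i j * (x i * x j) =
      A 0 1 * (x 0 * x 1) + A 0 2 * (x 0 * x 2) + A 0 3 * (x 0 * x 3) +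
        A 1 2 * (x 1 * x 2) + A 1 3 * (x 1 * x 3) + A 2 3 * (x 2 * x 3) := by
    rw [Fin.sum_univ_four, show Finset.Ioi (0 : Fin 4) = {1, 2, 3} by decide,
      show Finset.Ioi (1 : Fin 4) = {2, 3} by decide, show Finset.Ioi (2 : Fin 4) = {3} by decide,
      show Finset.Ioi (3 : Fin 4) = ∅ by decide, Finset.sum_insert (by decide),
      Finset.sum_pair (by decide), Finset.sum_pair (by decide), Finset.sum_singleton,
      Finset.sum_empty]
    ring
  simp only [Qval, Int.cast_id, h_offdiag, dotProduct, mulVec, Fin.sum_univ_four,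
    hA.1.apply 0 1, hA.1.apply 0 2, hA.1.apply 0 3, hA.1.apply 1 2, hA.1.apply 1 3, hA.1.apply 2 3]
  linear_combination x 0 ^ 2 * h_diag 0 + x 1 ^ 2 * h_diag 1 + x 2 ^ 2 * h_diag 2 +
    x 3 ^ 2 * h_diag 3

lemma posDef_of_posDefQF {A : Matrix (Fin 4) (Fin 4) ℤ} (hA : PosDefQF A) : A.PosDef := by
  refine PosDef.of_dotProduct_mulVec_pos ?_ fun x hx ↦ ?_
  · exact map_injective Int.cast_injective hA.isHermitian
  · have hx' : (Int.cast ∘ x : Fin 4 → ℝ) ≠ 0 := fun h ↦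
      hx (funext fun i ↦ by simpa using congrFun h i)
    have h_pos := hA.dotProduct_mulVec_pos hx'
    have h_cast : star (Int.cast ∘ x : Fin 4 → ℝ) ⬝ᵥ A.map Int.cast *ᵥ (Int.cast ∘ x) =
        ((star x ⬝ᵥ A *ᵥ x : ℤ) : ℝ) := by
      simp [dotProduct, mulVec]
    exact_mod_cast h_cast ▸ h_pos

/-- Pointwise bound: `r_R(n) ≪ n^{1+ε} D(R)^{-1/4+ε} + n^{1/2} (n D(R))^ε`. -/
theorem repCount_bound :
    ∀ ε : ℝ, 0 < ε → ∃ C : ℝ, 0 < C ∧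
      ∀ (A : Matrix (Fin 4) (Fin 4) ℤ) (n : ℕ),
        IsGram A → PosDefQF A → 0 < n →
        (repCount A n : ℝ) ≤
          C * ((n : ℝ) ^ ((1:ℝ) + ε) * (A.det : ℝ) ^ (-(1:ℝ)/4 + ε) +
            (n : ℝ) ^ ((1:ℝ)/2) * ((n : ℝ) * (A.det : ℝ)) ^ ε) := by
  intro ε hε
  obtain ⟨C, hC, hcount⟩ := exists_card_le_of_posDef hε
  refine ⟨C, hC, fun A n h_gram h_posDefQF hn ↦ ?_⟩
  have hA := posDef_of_posDefQF h_posDefQF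
  have hn₀ : 0 < (n : ℝ) := by exact_mod_cast hn
  have hD : 0 < (A.det : ℝ) := by exact_mod_cast det_pos_of_posDef hA
  have h_factor : (n : ℝ) ^ ((1 : ℝ) + ε) * (A.det : ℝ) ^ (-(1 : ℝ) / 4 + ε) +
      (n : ℝ) ^ ((1 : ℝ) / 2) * ((n : ℝ) * A.det) ^ ε =
        (n * A.det : ℝ) ^ ε * (n * (A.det : ℝ) ^ (-(1 : ℝ) / 4) + (n : ℝ) ^ ((1 : ℝ) / 2)) := by
    rw [Real.rpow_add hn₀, Real.rpow_add hD, Real.rpow_one, Real.mul_rpow hn₀.le hD.le]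
    ring
  rw [h_factor]
  refine natCard_subtype_le_of_forall_finset (by positivity) fun S hS ↦
    hcount hA hn S fun x hx ↦ ?_
  rw [dotProduct_mulVec_eq_two_mul_Qval h_gram, hS x hx]
end

section
/- For every ε > 0 there exists a constant C = C(ε) > 0 with the following property. Let Q be a primitive positive-definite quaternary integer-valued quadratic form with Gram matrix A, level N = N(Q), and discriminant D = det A. For each positive divisor c of N set w_c = N / gcd(c², N) and m_c = #{ y ∈ ℤ⁴/Aℤ⁴ : c·y = 0 } (the order of the c-torsion subgroup of the discriminant group, which has order D). Then ∑_{c | N} φ(gcd(c, N/c)) · w_c² · m_c ≤ C · D^(1+ε) · N · ∏_{p | N, p prime} (1 + 1/p), where φ is Euler's totient function. Equivalently, [SL₂(ℤ) : Γ₀(N)]⁻¹ times the sum over cusps a/c of Γ₀(N) of w²/|D^c| is at most C·D^ε, where |D^c| = D/m_c. -/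
open scoped BigOperators

/-- The order of the `c`-torsion subgroup of the discriminant group `ℤ⁴/Aℤ⁴`. -/
noncomputable def torsionCount (A : Matrix (Fin 4) (Fin 4) ℤ) (c : ℕ) : ℕ :=
  Nat.card {y : (Fin 4 → ℤ) ⧸ LinearMap.range (Matrix.mulVecLin A) // c • y = 0}

/-!
Let `G` be the discriminant group, of exponent `e`. Multiplication by `c` maps `G` onto `c • G`,
whose exponent is at least `e / c`; hence `|G[c]| * e ≤ c * |G|`. Since `2 * e * A⁻¹` is integral
with even diagonal, `N ≤ 2 * e`, so `|G[c]| * (N / c) ≤ 2 * |G|`. On the other hand the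
`φ (gcd c (N / c))` cusps of denominator `c` have width `w` with `gcd c (N / c) * w = N / c`, so
they contribute at most `(N / c) ^ 2 * |G[c]| ≤ 2 * |G| * (N / c)`. Summing over `c ∣ N` bounds the
sum by `2 * |G| * σ₁(N)`, and `σ₁(N) ≤ N * (1 + log N)` with `N ≤ 2 * |G|`.
-/

section FiniteAbelianGroup

variable (G : Type*) [AddCommGroup G]

lemma exponent_dvd_mul_exponent_range_nsmul (c : ℕ) :
    AddMonoid.exponent G ∣ c * AddMonoid.exponent (nsmulAddMonoidHom (α := G) c).range := by
  refine AddMonoid.exponent_dvd_of_forall_nsmul_eq_zero fun x ↦ ?_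
  rw [mul_nsmul]
  exact congrArg Subtype.val (AddMonoid.exponent_nsmul_eq_zero
    (⟨c • x, x, rfl⟩ : (nsmulAddMonoidHom (α := G) c).range))

lemma card_torsion_mul_exponent_dvd (c : ℕ) :
    Nat.card {y : G // c • y = 0} * AddMonoid.exponent G ∣ c * Nat.card G := by
  let f : G →+ G := nsmulAddMonoidHom c
  have card_mul_card : Nat.card f.ker * Nat.card f.range = Nat.card G := by
    rw [← AddSubgroup.index_ker, AddSubgroup.card_mul_index]
  have exponent_dvd : AddMonoid.exponent G ∣ c * Nat.card f.range :=
    (exponent_dvd_mul_exponent_range_nsmul G c).trans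
      (mul_dvd_mul_left c AddGroup.exponent_dvd_nat_card)
  rw [← card_mul_card, mul_left_comm]
  exact mul_dvd_mul_left (Nat.card f.ker) exponent_dvd

lemma card_torsion_mul_div_le [Finite G] {k N c : ℕ} (hN : N ≤ k * AddMonoid.exponent G)
    (hc : c ∣ N) :
    Nat.card {y : G // c • y = 0} * (N / c) ≤ k * Nat.card G := by
  obtain rfl | c_pos := c.eq_zero_or_pos
  · simp
  have torsion_le := Nat.le_of_dvd (mul_pos c_pos Nat.card_pos) (card_torsion_mul_exponent_dvd G c)
  refine Nat.le_of_mul_le_mul_left ?_ c_pos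
  calc c * (Nat.card {y : G // c • y = 0} * (N / c))
      = Nat.card {y : G // c • y = 0} * N := by
        rw [mul_left_comm, Nat.mul_div_cancel' hc]
    _ ≤ Nat.card {y : G // c • y = 0} * (k * AddMonoid.exponent G) := by gcongr
    _ = k * (Nat.card {y : G // c • y = 0} * AddMonoid.exponent G) := by ring
    _ ≤ k * (c * Nat.card G) := by gcongr
    _ = c * (k * Nat.card G) := by ring

end FiniteAbelianGroup

section Cusps

open scoped ArithmeticFunction.sigma

/-- The number of cusps of `Γ₀(N)` with denominator `c`, for `c ∣ N`. -/
def cuspCount (N c : ℕ) : ℕ :=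
  Nat.totient (Nat.gcd c (N / c))

/-- The width of the cusps of `Γ₀(N)` with denominator `c`, for `c ∣ N`. -/
def cuspWidth (N c : ℕ) : ℕ :=
  N / Nat.gcd (c ^ 2) N

lemma gcd_mul_cuspWidth {N c : ℕ} (hc : c ∣ N) :
    Nat.gcd c (N / c) * cuspWidth N c = N / c := by
  obtain ⟨d, rfl⟩ := hc
  obtain rfl | c_pos := c.eq_zero_or_pos
  · simp [cuspWidth]
  rw [cuspWidth, pow_two, Nat.gcd_mul_left, Nat.mul_div_mul_left _ _ c_pos,
    Nat.mul_div_cancel_left _ c_pos, Nat.mul_div_cancel' (Nat.gcd_dvd_right c d)]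

lemma cuspCount_mul_cuspWidth_sq_le {N c : ℕ} (hc : c ∣ N) :
    cuspCount N c * cuspWidth N c ^ 2 ≤ (N / c) ^ 2 :=
  calc cuspCount N c * cuspWidth N c ^ 2
      ≤ Nat.gcd c (N / c) ^ 2 * cuspWidth N c ^ 2 := by
        gcongr
        exact (Nat.totient_le _).trans (Nat.le_self_pow two_ne_zero _)
    _ = (N / c) ^ 2 := by rw [← mul_pow, gcd_mul_cuspWidth hc]

lemma sum_cuspCount_mul_cuspWidth_sq_mul_card_torsion_le (G : Type*) [AddCommGroup G] [Finite G]
    {k N : ℕ} (hN : N ≤ k * AddMonoid.exponent G) :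
    ∑ c ∈ N.divisors, cuspCount N c * cuspWidth N c ^ 2 * Nat.card {y : G // c • y = 0} ≤
      k * Nat.card G * σ 1 N :=
  calc ∑ c ∈ N.divisors, cuspCount N c * cuspWidth N c ^ 2 * Nat.card {y : G // c • y = 0}
      ≤ ∑ c ∈ N.divisors, k * Nat.card G * (N / c) := by
        refine Finset.sum_le_sum fun c hc ↦ ?_
        have c_dvd : c ∣ N := Nat.dvd_of_mem_divisors hc
        calc cuspCount N c * cuspWidth N c ^ 2 * Nat.card {y : G // c • y = 0}
            ≤ (N / c) ^ 2 * Nat.card {y : G // c • y = 0} := by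
              grw [cuspCount_mul_cuspWidth_sq_le c_dvd]
          _ = Nat.card {y : G // c • y = 0} * (N / c) * (N / c) := by ring
          _ ≤ k * Nat.card G * (N / c) := by grw [card_torsion_mul_div_le G hN c_dvd]
    _ = k * Nat.card G * σ 1 N := by
        rw [← Finset.mul_sum, Nat.sum_div_divisors N fun d ↦ d, ArithmeticFunction.sigma_one_apply]

lemma sigma_one_le_mul_one_add_log (N : ℕ) : (σ 1 N : ℝ) ≤ N * (1 + Real.log N) := by
  have divisors_subset : N.divisors ⊆ Finset.Icc 1 N := fun c hc ↦
    Finset.mem_Icc.2 ⟨Nat.pos_of_mem_divisors hc, Nat.divisor_le hc⟩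
  calc (σ 1 N : ℝ) = ∑ c ∈ N.divisors, ((N / c : ℕ) : ℝ) := by
        rw [ArithmeticFunction.sigma_one_apply, ← Nat.sum_div_divisors N fun d ↦ d, Nat.cast_sum]
    _ ≤ ∑ c ∈ N.divisors, (N : ℝ) * (c : ℝ)⁻¹ :=
        Finset.sum_le_sum fun c _ ↦ Nat.cast_div_le.trans_eq (div_eq_mul_inv _ _)
    _ ≤ ∑ c ∈ Finset.Icc 1 N, (N : ℝ) * (c : ℝ)⁻¹ :=
        Finset.sum_le_sum_of_subset_of_nonneg divisors_subset fun _ _ _ ↦ by positivity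
    _ = N * (harmonic N : ℝ) := by rw [← Finset.mul_sum, harmonic_eq_sum_Icc]; push_cast; rfl
    _ ≤ N * (1 + Real.log N) := by grw [harmonic_le_one_add_log N]

lemma sigma_one_le_mul_rpow_of_le_mul {N : ℕ} {K D ε : ℝ} (hε : 0 < ε) (hD : 1 ≤ D)
    (hN : (N : ℝ) ≤ K * D) :
    (σ 1 N : ℝ) ≤ N * ((1 + K ^ ε / ε) * D ^ ε) := by
  have K_nonneg : 0 ≤ K :=
    nonneg_of_mul_nonneg_left (N.cast_nonneg.trans hN) (by positivity)
  have log_le : Real.log N ≤ K ^ ε / ε * D ^ ε :=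
    calc Real.log N ≤ (N : ℝ) ^ ε / ε := Real.log_le_rpow_div N.cast_nonneg hε
      _ ≤ (K * D) ^ ε / ε := by gcongr
      _ = K ^ ε / ε * D ^ ε := by
        rw [Real.mul_rpow K_nonneg (by positivity), mul_div_right_comm]
  have one_le : 1 ≤ D ^ ε := Real.one_le_rpow hD hε.le
  calc (σ 1 N : ℝ) ≤ N * (1 + Real.log N) := sigma_one_le_mul_one_add_log N
    _ ≤ N * (D ^ ε + K ^ ε / ε * D ^ ε) := by gcongr
    _ = N * ((1 + K ^ ε / ε) * D ^ ε) := by ring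

end Cusps

section Lattice

variable {ι : Type*}

/-- A rational matrix which is an integer matrix with even diagonal, i.e. (when symmetric) the Gram
matrix of an integer-valued quadratic form. -/
def IsEvenIntegral (B : Matrix ι ι ℚ) : Prop :=
  ∃ C : Matrix ι ι ℤ, C.map (Int.cast : ℤ → ℚ) = B ∧ ∀ i, 2 ∣ C i i

variable [Fintype ι]

/-- The discriminant group `ℤ^ι / A ℤ^ι` of the lattice with Gram matrix `A`. -/
abbrev DiscriminantGroup (A : Matrix ι ι ℤ) : Type _ :=
  (ι → ℤ) ⧸ LinearMap.range A.mulVecLin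

variable [DecidableEq ι]

/-- `N` is the level of `A`, in any number of variables; `IsLevel` is the quaternary case. -/
def IsLevelOf (A : Matrix ι ι ℤ) (N : ℕ) : Prop :=
  IsLeast {M : ℕ | 0 < M ∧ IsEvenIntegral ((M : ℚ) • (A.map (Int.cast : ℤ → ℚ))⁻¹)} N

lemma IsLevel.isLevelOf {A : Matrix (Fin 4) (Fin 4) ℤ} {N : ℕ} (hN : IsLevel A N) :
    IsLevelOf A N :=
  ⟨⟨hN.1, hN.2.1⟩, fun M hM ↦ hN.2.2 M hM.1 hM.2⟩

lemma card_discriminantGroup {A : Matrix ι ι ℤ} (hA : A.det ≠ 0) :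
    Nat.card (DiscriminantGroup A) = A.det.natAbs := by
  have mulVec_injective : Function.Injective A.mulVecLin :=
    Matrix.mulVec_injective_of_det_ne_zero hA
  rw [← Submodule.natAbs_det_equiv _ (LinearEquiv.ofInjective _ mulVec_injective),
    ← LinearMap.det_toLin' A]
  rfl

lemma finite_discriminantGroup {A : Matrix ι ι ℤ} (hA : A.det ≠ 0) :
    Finite (DiscriminantGroup A) :=
  Nat.finite_of_card_ne_zero (by rwa [card_discriminantGroup hA, Int.natAbs_ne_zero])

lemma exists_mul_eq_exponent_smul_one (A : Matrix ι ι ℤ) :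
    ∃ B : Matrix ι ι ℤ, A * B = (AddMonoid.exponent (DiscriminantGroup A) : ℤ) • 1 := by
  set e := AddMonoid.exponent (DiscriminantGroup A)
  have smul_mem_range (v : ι → ℤ) : ∃ b, A.mulVec b = e • v := by
    have h := AddMonoid.exponent_nsmul_eq_zero (Submodule.Quotient.mk v : DiscriminantGroup A)
    rwa [← Submodule.Quotient.mk_smul, Submodule.Quotient.mk_eq_zero] at h
  choose b hb using fun j ↦ smul_mem_range (Pi.single j 1)
  refine ⟨(Matrix.of b).transpose, Matrix.ext fun i j ↦ ?_⟩
  simpa [Matrix.mulVec, Matrix.mul_apply, dotProduct, Matrix.one_apply, Pi.single_apply]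
    using congrFun (hb j) i

lemma map_intCast_eq_smul_inv (K : Type*) [Field K] [CharZero K] {A B : Matrix ι ι ℤ} {r : ℤ}
    (hA : A.det ≠ 0) (hAB : A * B = r • 1) :
    B.map (Int.cast : ℤ → K) = (r : K) • (A.map (Int.cast : ℤ → K))⁻¹ := by
  have isUnit_det : IsUnit (A.map (Int.cast : ℤ → K)).det :=
    isUnit_iff_ne_zero.2 (by rw [← Int.cast_det]; exact_mod_cast hA)
  have map_mul : A.map (Int.cast : ℤ → K) * B.map (Int.cast : ℤ → K) = (r : K) • 1 := by
    rw [← Matrix.map_mul_intCast, hAB]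
    ext i j
    simp [Matrix.intCast_apply, Matrix.one_apply]
  rw [← Matrix.nonsing_inv_mul_cancel_left _ (B.map _) isUnit_det, map_mul, Matrix.mul_smul,
    Matrix.mul_one]

lemma IsLevelOf.le_two_mul_exponent {A : Matrix ι ι ℤ} {N : ℕ} (hA : A.det ≠ 0)
    (hN : IsLevelOf A N) :
    N ≤ 2 * AddMonoid.exponent (DiscriminantGroup A) := by
  have := finite_discriminantGroup hA
  have exponent_pos : 0 < AddMonoid.exponent (DiscriminantGroup A) :=
    Nat.pos_of_ne_zero AddMonoid.exponent_ne_zero_of_finite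
  obtain ⟨B, hB⟩ := exists_mul_eq_exponent_smul_one A
  have mul_two_smul :
      A * ((2 : ℤ) • B) = ((2 * AddMonoid.exponent (DiscriminantGroup A) : ℕ) : ℤ) • 1 := by
    rw [Matrix.mul_smul, hB, smul_smul, Nat.cast_mul, Nat.cast_two]
  refine hN.2 ⟨by positivity, (2 : ℤ) • B, ?_, fun i ↦ Dvd.intro (B i i) rfl⟩
  exact_mod_cast map_intCast_eq_smul_inv ℚ hA mul_two_smul

lemma IsLevelOf.le_two_mul_natAbs_det {A : Matrix ι ι ℤ} {N : ℕ} (hA : A.det ≠ 0)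
    (hN : IsLevelOf A N) :
    N ≤ 2 * A.det.natAbs := by
  have := finite_discriminantGroup hA
  have exponent_le : AddMonoid.exponent (DiscriminantGroup A) ≤ A.det.natAbs := by
    rw [← card_discriminantGroup hA]
    exact Nat.le_of_dvd Nat.card_pos AddGroup.exponent_dvd_nat_card
  grw [hN.le_two_mul_exponent hA, exponent_le]

lemma PosDefQF.det_pos {A : Matrix (Fin 4) (Fin 4) ℤ} (hA : PosDefQF A) : 0 < A.det := by
  have h : 0 < (A.map (Int.cast : ℤ → ℝ)).det := Matrix.PosDef.det_pos hA
  rwa [← Int.cast_det, Int.cast_pos] at h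

theorem cusp_width_sum_bound_general {A : Matrix ι ι ℤ} {N : ℕ} {ε : ℝ} (hε : 0 < ε)
    (hA : A.det ≠ 0) (hN : IsLevelOf A N) :
    ((∑ c ∈ N.divisors,
        cuspCount N c * cuspWidth N c ^ 2 *
          Nat.card {y : DiscriminantGroup A // c • y = 0} : ℕ) : ℝ) ≤
      2 * (1 + 2 ^ ε / ε) * |(A.det : ℝ)| ^ (1 + ε) * N := by
  have := finite_discriminantGroup hA
  have sum_le := sum_cuspCount_mul_cuspWidth_sq_mul_card_torsion_le _ (hN.le_two_mul_exponent hA)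
  rw [card_discriminantGroup hA] at sum_le
  rw [← Int.cast_abs, ← Nat.cast_natAbs]
  set D := A.det.natAbs
  have one_le_D : (1 : ℝ) ≤ D := by exact_mod_cast Int.natAbs_pos.2 hA
  have sigma_le := sigma_one_le_mul_rpow_of_le_mul (K := 2) hε one_le_D
    (by exact_mod_cast hN.le_two_mul_natAbs_det hA)
  calc _ ≤ ((2 * D * ArithmeticFunction.sigma 1 N : ℕ) : ℝ) := by exact_mod_cast sum_le
    _ ≤ 2 * D * (N * ((1 + 2 ^ ε / ε) * D ^ ε)) := by push_cast at sigma_le ⊢; gcongr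
    _ = 2 * (1 + 2 ^ ε / ε) * (D : ℝ) ^ (1 + ε) * N := by
      rw [Real.rpow_add (by positivity), Real.rpow_one]; ring

end Lattice

/-- Lemma 4 of Rouse: `∑_{c | N} φ(gcd(c,N/c)) w_c² |D_c| ≪ D^{1+ε} · N ∏_{p|N} (1+1/p)`,
i.e. the average of `w²/|D^c|` over the cusps of `Γ₀(N)` is `≪ D^ε`. -/
theorem cusp_width_sum_bound :
    ∀ ε : ℝ, 0 < ε → ∃ C : ℝ, 0 < C ∧
      ∀ (A : Matrix (Fin 4) (Fin 4) ℤ) (N : ℕ),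
        IsGram A → IsPrimitiveQF A → PosDefQF A → IsLevel A N →
        ((∑ c ∈ N.divisors,
            Nat.totient (Nat.gcd c (N / c)) * (N / Nat.gcd (c ^ 2) N) ^ 2 *
              torsionCount A c : ℕ) : ℝ) ≤
          C * (A.det : ℝ) ^ ((1:ℝ) + ε) * (N : ℝ) *
            ∏ p ∈ N.primeFactors, (1 + 1 / (p : ℝ)) := by
  refine fun ε hε ↦ ⟨2 * (1 + 2 ^ ε / ε), by positivity, fun A N _ _ hA hN ↦ ?_⟩
  have det_pos : (0 : ℝ) < A.det := Int.cast_pos.2 hA.det_pos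
  grw [← Finset.one_le_prod fun p _ ↦ by simp, mul_one, ← abs_of_pos det_pos]
  exact cusp_width_sum_bound_general hε hA.det_pos.ne' hN.isLevelOf
end
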